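/- Under the zero-loss hypothesis, the thickened prediction foreground F_ε(P) and the thickened ground-truth foreground F_{2ε}(G) are homotopy equivalent topological spaces (with the subspace topology from ℝ²). -/

import Mathlib

open Set Metric

noncomputable section

/-- The plane modeled as `Fin 2 → ℝ` with the Pi (sup) norm. -/
abbrev Plane : Type := Fin 2 → ℝ

/-- The Euclidean plane (for Euclidean-norm disks and annuli). -/
abbrev EPlane : Type := EuclideanSpace ℝ (Fin 2)

/-- The closed unit pixel `[i-1,i] × [j-1,j]` for a pixel index `(i,j)`. -/
def pixel (p : ℕ × ℕ) : Set Plane :=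
  {x | x 0 ∈ Set.Icc ((p.1 : ℝ) - 1) (p.1 : ℝ) ∧ x 1 ∈ Set.Icc ((p.2 : ℝ) - 1) (p.2 : ℝ)}

/-- A binary image `S` lies on the `h × w` grid `{1,…,h} × {1,…,w}`. -/
def OnGrid (S : Set (ℕ × ℕ)) (h w : ℕ) : Prop :=
  S ⊆ Set.Icc 1 h ×ˢ Set.Icc 1 w

/-- The foreground `F(S)` of a binary image. -/
def fg (S : Set (ℕ × ℕ)) : Set Plane := ⋃ p ∈ S, pixel p

/-- Closed `ε`-thickening `D_ε(X)` with respect to the sup norm. -/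
def thick (ε : ℝ) (X : Set Plane) : Set Plane := {y | ∃ x ∈ X, ‖x - y‖ ≤ ε}

/-- `C` is a connected component of `A` (as a subset of the plane). -/
def IsCompOf (C A : Set Plane) : Prop := ∃ x ∈ A, C = connectedComponentIn A x

/-- Two subsets share a boundary edge if their closures intersect in an infinite set. -/
def SharesEdge (C D : Set Plane) : Prop := (closure C ∩ closure D).Infinite

/-- `X` strongly deformation retracts onto `A`. -/
def SDR (X A : Set Plane) : Prop :=
  ∃ H : C(↥X × unitInterval, ↥X),
    (∀ x, H (x, 0) = x) ∧ (∀ x, ((H (x, 1) : Plane)) ∈ A) ∧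
    (∀ a : ↥X, (a : Plane) ∈ A → ∀ t, H (a, t) = a)

def TPset (P G : Set (ℕ × ℕ)) (ε : ℝ) : Set Plane := thick ε (fg P) ∩ thick (2 * ε) (fg G)
def TNset (P G : Set (ℕ × ℕ)) (ε : ℝ) : Set Plane := (thick ε (fg P))ᶜ ∩ (thick (2 * ε) (fg G))ᶜ
def FPset (P G : Set (ℕ × ℕ)) (ε : ℝ) : Set Plane := thick ε (fg P) ∩ (thick (2 * ε) (fg G))ᶜ
def FNset (P G : Set (ℕ × ℕ)) (ε : ℝ) : Set Plane := (thick ε (fg P))ᶜ ∩ thick (2 * ε) (fg G)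

/-- A component `C` (of `FP` or `FN`) is regular: exactly one component of `TP` and exactly
one component of `TN` share a boundary edge with it. -/
def RegularComp (P G : Set (ℕ × ℕ)) (ε : ℝ) (C : Set Plane) : Prop :=
  (∃! T : Set Plane, IsCompOf T (TPset P G ε) ∧ SharesEdge T C) ∧
  (∃! T : Set Plane, IsCompOf T (TNset P G ε) ∧ SharesEdge T C)

/-- The zero-loss hypothesis: every component of `FP` and every component of `FN` is regular. -/
def ZeroLoss (P G : Set (ℕ × ℕ)) (ε : ℝ) : Prop :=
  (∀ C : Set Plane, IsCompOf C (FPset P G ε) → RegularComp P G ε C) ∧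
  (∀ C : Set Plane, IsCompOf C (FNset P G ε) → RegularComp P G ε C)

/-!
Both foregrounds are unions of cells of a common grid, and each of them is homotopy equivalent to
their intersection `TP`. By symmetry it suffices to collapse `X = TP ∪ FP` onto `TP`.

Every component of `FP` meets the background along an edge, which gives a free face; removing it
frees the edges of the next faces, until all the faces of `FP` are gone. What remains of `FP` is a
graph, whose leaves away from `TP` are pruned. If pruning stops early, then the remaining graph
contains a cycle or a path between two cells of `TP`, and the latter closes up to a cycle as a
component of `FP` adjoins only one component of `TP`. A critical edge on the cycle has the
background on both of its sides, so by the mod 2 Jordan curve theorem for the grid these two sides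
lie in different components of the background; both adjoin the same component of `FP`, which
contradicts the uniqueness of the adjoining component of `TN`.
-/

/-! ### Cells of the plane -/

/-- A cell of the plane cut by two families of grid lines (a point of the Khalimsky plane): an even
coordinate stands for a grid line, an odd one for the open interval between two consecutive ones. -/
@[ext] structure Cell where
  x : ℤ
  y : ℤ
deriving DecidableEq

/-- The order of the Khalimsky line: the line `a` is in the closure of the strip or line `b`. -/
def Incident (a b : ℤ) : Prop := a = b ∨ (a % 2 = 0 ∧ (b = a + 1 ∨ b = a - 1))

/-- Cells are ordered by inclusion in the closure. -/
instance : PartialOrder Cell where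
  le c d := Incident c.x d.x ∧ Incident c.y d.y
  le_refl _ := ⟨Or.inl rfl, Or.inl rfl⟩
  le_trans c d e := by unfold Incident; omega
  le_antisymm c d := by unfold Incident; rw [Cell.ext_iff]; omega

/-- A two-dimensional cell. -/
def IsFace (c : Cell) : Prop := c.x % 2 = 1 ∧ c.y % 2 = 1

/-- A one-dimensional cell. -/
def IsEdge (c : Cell) : Prop := (c.x + c.y) % 2 = 1

/-- A zero-dimensional cell. -/
def IsVert (c : Cell) : Prop := c.x % 2 = 0 ∧ c.y % 2 = 0

lemma Cell.le_iff {c d : Cell} : c ≤ d ↔ Incident c.x d.x ∧ Incident c.y d.y := Iff.rfl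

lemma Cell.le_iff_arith {c d : Cell} : c ≤ d ↔
    (c.x = d.x ∨ (c.x % 2 = 0 ∧ (d.x = c.x + 1 ∨ d.x = c.x - 1))) ∧
    (c.y = d.y ∨ (c.y % 2 = 0 ∧ (d.y = c.y + 1 ∨ d.y = c.y - 1))) := Iff.rfl

/-- The reflection of the cell `c` in the centre of the cell `e`; it exchanges the two sides, and
the two ends, of an edge `e`. -/
def Cell.opp (e c : Cell) : Cell := ⟨2 * e.x - c.x, 2 * e.y - c.y⟩

section cells

variable {c d e s s' v w : Cell}

lemma Cell.opp_opp (e c : Cell) : e.opp (e.opp c) = c := by simp [Cell.opp]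

lemma Cell.le_opp (h : e ≤ s) : e ≤ e.opp s := by
  simp only [Cell.le_iff_arith, Cell.opp] at *; omega

lemma Cell.opp_le (h : v ≤ e) : e.opp v ≤ e := by
  simp only [Cell.le_iff_arith, Cell.opp] at *; omega

lemma Cell.opp_ne (h : c ≠ e) : e.opp c ≠ c := by
  simp only [ne_eq, Cell.ext_iff, Cell.opp] at *; omega

lemma IsFace.opp (h : IsFace c) : IsFace (e.opp c) := by
  simp only [IsFace, Cell.opp] at *; omega

lemma IsVert.opp (h : IsVert c) : IsVert (e.opp c) := by
  simp only [IsVert, Cell.opp] at *; omega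

lemma isFace_or_isEdge_or_isVert (c : Cell) : IsFace c ∨ IsEdge c ∨ IsVert c := by
  simp only [IsFace, IsEdge, IsVert]; omega

lemma IsEdge.not_isFace (he : IsEdge e) : ¬IsFace e := by
  simp only [IsEdge, IsFace] at *; omega

lemma IsEdge.not_isVert (he : IsEdge e) : ¬IsVert e := by
  simp only [IsEdge, IsVert] at *; omega

lemma IsFace.not_isVert (hc : IsFace c) : ¬IsVert c := by
  simp only [IsFace, IsVert] at *; omega

lemma IsFace.eq_of_le (hc : IsFace c) (h : c ≤ d) : d = c := by
  simp only [IsFace, Cell.le_iff_arith, Cell.ext_iff] at *; omega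

lemma IsVert.eq_of_le (hd : IsVert d) (h : c ≤ d) : c = d := by
  simp only [IsVert, Cell.le_iff_arith, Cell.ext_iff] at *; omega

lemma IsEdge.eq_or_isVert_of_le (he : IsEdge e) (h : c ≤ e) : c = e ∨ IsVert c := by
  simp only [IsEdge, IsVert, Cell.le_iff_arith, Cell.ext_iff] at *; omega

lemma IsEdge.eq_or_isFace_of_le (he : IsEdge e) (h : e ≤ d) : d = e ∨ IsFace d := by
  simp only [IsEdge, IsFace, Cell.le_iff_arith, Cell.ext_iff] at *; omega

lemma IsVert.eq_or_isEdge_or_isFace_of_le (hv : IsVert v) (h : v ≤ d) :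
    d = v ∨ IsEdge d ∨ IsFace d := by
  simp only [IsVert, IsEdge, IsFace, Cell.le_iff_arith, Cell.ext_iff] at *; omega

lemma IsEdge.eq_or_eq_opp_of_isFace (he : IsEdge e) (hs : IsFace s) (hs' : IsFace s')
    (h : e ≤ s) (h' : e ≤ s') : s' = s ∨ s' = e.opp s := by
  simp only [IsEdge, IsFace, Cell.le_iff_arith, Cell.ext_iff, Cell.opp] at *; omega

lemma IsEdge.eq_or_eq_opp_of_isVert (he : IsEdge e) (hv : IsVert v) (hw : IsVert w)
    (h : v ≤ e) (h' : w ≤ e) : w = v ∨ w = e.opp v := by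
  simp only [IsEdge, IsVert, Cell.le_iff_arith, Cell.ext_iff, Cell.opp] at *; omega

lemma exists_isVert_le (c : Cell) : ∃ v, IsVert v ∧ v ≤ c := by
  refine ⟨⟨c.x - c.x % 2, c.y - c.y % 2⟩, ?_, ?_⟩ <;>
    simp only [IsVert, Cell.le_iff_arith] <;> omega

lemma IsEdge.exists_isFace_ge (he : IsEdge e) : ∃ s, IsFace s ∧ e ≤ s := by
  refine ⟨⟨e.x + 1 - e.x % 2, e.y + 1 - e.y % 2⟩, ?_, ?_⟩ <;>
    simp only [IsEdge, IsFace, Cell.le_iff_arith] at * <;> omega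

end cells

/-- Two cells are linked in `S` if a chain of incidences between cells of `S` joins them, that is,
if they lie in the same connected component of the union of the cells of `S`. -/
def Linked (S : Set Cell) : Cell → Cell → Prop :=
  Relation.EqvGen fun c d => c ∈ S ∧ d ∈ S ∧ c ≤ d

namespace Linked

variable {S T : Set Cell} {c d e : Cell}

@[refl] lemma refl (S : Set Cell) (c : Cell) : Linked S c c := Relation.EqvGen.refl c

@[symm] lemma symm (h : Linked S c d) : Linked S d c := Relation.EqvGen.symm _ _ h

lemma trans (h : Linked S c d) (h' : Linked S d e) : Linked S c e :=
  Relation.EqvGen.trans _ _ _ h h'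

lemma of_le (hc : c ∈ S) (hd : d ∈ S) (h : c ≤ d) : Linked S c d :=
  Relation.EqvGen.rel _ _ ⟨hc, hd, h⟩

lemma mono (hST : S ⊆ T) (h : Linked S c d) : Linked T c d :=
  Relation.EqvGen.mono (fun _ _ h => ⟨hST h.1, hST h.2.1, h.2.2⟩) _ _ h

lemma eq_of_forall_le {α : Type*} {f : Cell → α} (hf : ∀ c ∈ S, ∀ d ∈ S, c ≤ d → f c = f d)
    (h : Linked S c d) : f c = f d := by
  induction h with
  | rel c d h => exact hf c h.1 d h.2.1 h.2.2
  | refl c => rfl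
  | symm c d _ ih => exact ih.symm
  | trans c d e _ _ ih ih' => exact ih.trans ih'

lemma map {r : Cell → Cell} (hr : ∀ c ∈ S, ∀ d ∈ S, c ≤ d → Linked T (r c) (r d))
    (h : Linked S c d) : Linked T (r c) (r d) := by
  induction h with
  | rel c d h => exact hr c h.1 d h.2.1 h.2.2
  | refl c => exact refl T _
  | symm c d _ ih => exact ih.symm
  | trans c d e _ _ ih ih' => exact ih.trans ih'

lemma mem_iff (h : Linked S c d) : c ∈ S ↔ d ∈ S :=
  Iff.of_eq <| h.eq_of_forall_le (f := (· ∈ S)) fun _ hc _ hd _ =>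
    propext ⟨fun _ => hd, fun _ => hc⟩

end Linked

/-- `f` takes the same value on the two sides of every edge of `E`. -/
def ConstAcross {α : Type*} (f : Cell → α) (E : Set Cell) : Prop :=
  ∀ e ∈ E, IsEdge e → ∀ s, IsFace s → e ≤ s → f s = f (e.opp s)

lemma ConstAcross.mono {α : Type*} {f : Cell → α} {E E' : Set Cell} (h : ConstAcross f E)
    (hE : E' ⊆ E) : ConstAcross f E' := fun e he => h e (hE he)

/-! ### Pushing cells into faces -/

/-- A choice, for every grid line, of a neighbouring strip. -/
structure Push where
  toFun : ℤ → ℤ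
  odd : ∀ a, toFun a % 2 = 1
  incident : ∀ a, Incident a (toFun a)

/-- The face containing `c` in its closure which is selected by the choices `π`. -/
def Push.cell (π : Push) (c : Cell) : Cell := ⟨π.toFun c.x, π.toFun c.y⟩

/-- Membership in `S` does not change when either coordinate is pushed off its grid line. For a
closed set of cells this says that its union is regular closed, with no two faces meeting only
at a vertex. -/
structure IsStable (π : Push) (S : Set Cell) : Prop where
  fst : ∀ a b, (⟨π.toFun a, b⟩ : Cell) ∈ S ↔ (⟨a, b⟩ : Cell) ∈ S
  snd : ∀ a b, (⟨a, π.toFun b⟩ : Cell) ∈ S ↔ (⟨a, b⟩ : Cell) ∈ S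

namespace IsStable

variable {π : Push} {S T : Set Cell}

lemma compl (hS : IsStable π S) : IsStable π Sᶜ :=
  ⟨fun a b => not_congr (hS.fst a b), fun a b => not_congr (hS.snd a b)⟩

lemma inter (hS : IsStable π S) (hT : IsStable π T) : IsStable π (S ∩ T) :=
  ⟨fun a b => and_congr (hS.fst a b) (hT.fst a b), fun a b => and_congr (hS.snd a b) (hT.snd a b)⟩

lemma diff (hS : IsStable π S) (hT : IsStable π T) : IsStable π (S \ T) := hS.inter hT.compl

lemma union (hS : IsStable π S) (hT : IsStable π T) : IsStable π (S ∪ T) :=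
  ⟨fun a b => or_congr (hS.fst a b) (hT.fst a b), fun a b => or_congr (hS.snd a b) (hT.snd a b)⟩

end IsStable

namespace Push

variable {π : Push} {S : Set Cell} {α : Type*} {f : Cell → α} {c d : Cell}

lemma isFace_cell (π : Push) (c : Cell) : IsFace (π.cell c) := ⟨π.odd _, π.odd _⟩

lemma le_cell (π : Push) (c : Cell) : c ≤ π.cell c := ⟨π.incident _, π.incident _⟩

lemma cell_of_isFace (hc : IsFace c) : π.cell c = c := hc.eq_of_le (π.le_cell c)

lemma cell_mem_iff (hS : IsStable π S) : π.cell c ∈ S ↔ c ∈ S :=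
  (hS.fst _ _).trans (hS.snd _ _)

lemma eq_of_incident_fst (hf : ConstAcross f S) (hS : IsStable π S) (hc : c ∈ S) {a : ℤ}
    (ha : Incident c.x a) : f (π.cell c) = f (π.cell ⟨a, c.y⟩) := by
  by_cases h : π.toFun c.x = π.toFun a
  · simp only [cell, h]
  have hne : c.x ≠ a := fun h' => h (by rw [h'])
  have incident := π.incident c.x
  have incident' := π.incident a
  have odd_x := π.odd c.x
  have odd_y := π.odd c.y
  simp only [Incident] at ha incident incident'
  have edge : IsEdge ⟨c.x, π.toFun c.y⟩ := by simp only [IsEdge]; omega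
  have opposite : π.cell ⟨a, c.y⟩ = (⟨c.x, π.toFun c.y⟩ : Cell).opp (π.cell c) := by
    simp only [Cell.ext_iff, Cell.opp, cell]
    constructor <;> omega
  rw [opposite]
  exact hf _ ((hS.snd _ _).2 hc) edge _ (π.isFace_cell c) ⟨π.incident _, Or.inl rfl⟩

lemma eq_of_incident_snd (hf : ConstAcross f S) (hS : IsStable π S) (hc : c ∈ S) {b : ℤ}
    (hb : Incident c.y b) : f (π.cell c) = f (π.cell ⟨c.x, b⟩) := by
  by_cases h : π.toFun c.y = π.toFun b
  · simp only [cell, h]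
  have hne : c.y ≠ b := fun h' => h (by rw [h'])
  have incident := π.incident c.y
  have incident' := π.incident b
  have odd_x := π.odd c.x
  have odd_y := π.odd c.y
  simp only [Incident] at hb incident incident'
  have edge : IsEdge ⟨π.toFun c.x, c.y⟩ := by simp only [IsEdge]; omega
  have opposite : π.cell ⟨c.x, b⟩ = (⟨π.toFun c.x, c.y⟩ : Cell).opp (π.cell c) := by
    simp only [Cell.ext_iff, Cell.opp, cell]
    constructor <;> omega
  rw [opposite]
  exact hf _ ((hS.fst _ _).2 hc) edge _ (π.isFace_cell c) ⟨Or.inl rfl, π.incident _⟩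

lemma eq_of_linked (hf : ConstAcross f S) (hS : IsStable π S) (hoc : S.OrdConnected)
    (h : Linked S c d) : f (π.cell c) = f (π.cell d) := by
  refine h.eq_of_forall_le (f := f ∘ π.cell) fun c hc d hd hcd => ?_
  have hm : (⟨d.x, c.y⟩ : Cell) ∈ S := hoc.out hc hd ⟨⟨hcd.1, Or.inl rfl⟩, Or.inl rfl, hcd.2⟩
  exact (eq_of_incident_fst hf hS hc hcd.1).trans (eq_of_incident_snd hf hS hm hcd.2)

end Push

/-! ### Chains modulo two -/

/-- The boundary of the mod 2 chain of edges `z`, evaluated at the vertex `v`. -/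
def boundary (z : Cell → ZMod 2) (v : Cell) : ZMod 2 :=
  z ⟨v.x - 1, v.y⟩ + z ⟨v.x + 1, v.y⟩ + z ⟨v.x, v.y - 1⟩ + z ⟨v.x, v.y + 1⟩

lemma boundary_add (z z' : Cell → ZMod 2) (v : Cell) :
    boundary (z + z') v = boundary z v + boundary z' v := by
  simp only [boundary, Pi.add_apply]; ring

lemma boundary_single_of_le {e v : Cell} (he : IsEdge e) (hv : IsVert v) (hve : v ≤ e) :
    boundary (Pi.single e 1) v = 1 := by
  have neighbour : e = ⟨v.x - 1, v.y⟩ ∨ e = ⟨v.x + 1, v.y⟩ ∨ e = ⟨v.x, v.y - 1⟩ ∨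
      e = ⟨v.x, v.y + 1⟩ := by
    simp only [IsEdge, IsVert, Cell.le_iff_arith, Cell.ext_iff] at *; omega
  rcases neighbour with rfl | rfl | rfl | rfl <;>
    simp [boundary, Cell.ext_iff, show ∀ a : ℤ, a - 1 ≠ a + 1 by lia,
      show ∀ a : ℤ, a + 1 ≠ a - 1 by lia]

lemma boundary_single_of_not_le {e v : Cell} (hv : IsVert v) (hve : ¬v ≤ e) :
    boundary (Pi.single e 1) v = 0 := by
  simp only [IsVert, Cell.le_iff_arith] at *
  simp only [boundary]
  repeat rw [Pi.single_eq_of_ne (by simp only [ne_eq, Cell.ext_iff]; omega)]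
  simp

lemma boundary_single {e u v : Cell} (he : IsEdge e) (hu : IsVert u) (hue : u ≤ e)
    (hv : IsVert v) : boundary (Pi.single e 1) v =
      (Pi.single u 1 + Pi.single (e.opp u) 1 : Cell → ZMod 2) v := by
  have hne : e.opp u ≠ u := Cell.opp_ne fun h => he.not_isVert (h ▸ hu)
  by_cases hve : v ≤ e
  · rw [boundary_single_of_le he hv hve]
    rcases he.eq_or_eq_opp_of_isVert hu hv hue hve with rfl | rfl
    · simp [Pi.single_eq_of_ne hne.symm]
    · simp [Pi.single_eq_of_ne hne]
  · rw [boundary_single_of_not_le hv hve, Pi.add_apply,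
      Pi.single_eq_of_ne (by rintro rfl; exact hve hue),
      Pi.single_eq_of_ne (by rintro rfl; exact hve (Cell.opp_le hue)), add_zero]

section potential

variable {z : Cell → ZMod 2} {m : ℤ}

/-- The number, modulo two, of vertical edges of `z` crossed on the way along the row `b` from far
left to the strip before the line `2 * k`. -/
def crossings (z : Cell → ZMod 2) (m k b : ℤ) : ZMod 2 := ∑ i ∈ Finset.Ico m k, z ⟨2 * i, b⟩

lemma crossings_of_le {k : ℤ} (h : k ≤ m) (b : ℤ) : crossings z m k b = 0 := by
  simp [crossings, Finset.Ico_eq_empty_of_le h]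

lemma crossings_add_one (hm : ∀ c : Cell, c.x < 2 * m → z c = 0) (k b : ℤ) :
    crossings z m (k + 1) b = crossings z m k b + z ⟨2 * k, b⟩ := by
  rcases lt_or_ge k m with h | h
  · rw [crossings_of_le h, crossings_of_le h.le, hm _ (by simp only; omega), add_zero]
  · rw [crossings, ← Finset.insert_Ico_right_eq_Ico_add_one h, Finset.sum_insert (by simp),
      add_comm, crossings]

lemma crossings_add_crossings (hm : ∀ c : Cell, c.x < 2 * m → z c = 0)
    (hz : ∀ v, IsVert v → boundary z v = 0) {b : ℤ} (hb : b % 2 = 0) (k : ℤ) :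
    crossings z m k (b - 1) + crossings z m k (b + 1) = z ⟨2 * k - 1, b⟩ := by
  rcases lt_or_ge k m with h | h
  · rw [crossings_of_le h.le, crossings_of_le h.le, hm _ (by simp only; omega), add_zero]
  induction k, h using Int.leInduction with
  | base => rw [crossings_of_le le_rfl, crossings_of_le le_rfl, hm _ (by simp), add_zero]
  | succ k _ ih =>
    have hv := hz ⟨2 * k, b⟩ ⟨by simp, hb⟩
    have cancel : ∀ p q r s t u : ZMod 2, p + q = r → r + u + s + t = 0 → p + s + (q + t) = u := by
      decide
    rw [crossings_add_one hm, crossings_add_one hm, show 2 * (k + 1) - 1 = 2 * k + 1 by ring]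
    exact cancel _ _ _ _ _ _ ih hv

lemma exists_coboundary_eq (hm : ∀ c : Cell, c.x < 2 * m → z c = 0)
    (hz : ∀ v, IsVert v → boundary z v = 0) :
    ∃ f : Cell → ZMod 2, ∀ e, IsEdge e → ∀ s, IsFace s → e ≤ s → f s + f (e.opp s) = z e := by
  refine ⟨fun c => crossings z m ((c.x + 1) / 2) c.y, fun ⟨a, b⟩ he ⟨a', b'⟩ hs hes => ?_⟩
  have cancel : ∀ p q : ZMod 2, p + q + p = q := by decide
  simp only [IsEdge, IsFace, Cell.le_iff_arith, Cell.opp] at *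
  rcases Int.emod_two_eq_zero_or_one a with ha | ha
  · obtain ⟨k, rfl⟩ : ∃ k, a = 2 * k := ⟨a / 2, by omega⟩
    obtain rfl : b' = b := by omega
    have hk := crossings_add_one hm k b'
    rw [show 2 * b' - b' = b' by ring]
    rcases (show a' = 2 * k + 1 ∨ a' = 2 * k - 1 by omega) with rfl | rfl
    · rw [show (2 * k + 1 + 1) / 2 = k + 1 by omega,
        show (2 * (2 * k) - (2 * k + 1) + 1) / 2 = k by omega, hk, cancel]
    · rw [show (2 * k - 1 + 1) / 2 = k by omega,
        show (2 * (2 * k) - (2 * k - 1) + 1) / 2 = k + 1 by omega, hk, add_comm, cancel]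
  · obtain rfl : a' = a := by omega
    have hk := crossings_add_crossings hm hz (b := b) (by omega) ((a' + 1) / 2)
    rw [show 2 * ((a' + 1) / 2) - 1 = a' by omega] at hk
    rw [show 2 * a' - a' = a' by ring, ← hk]
    rcases (show b' = b + 1 ∨ b' = b - 1 by omega) with rfl | rfl
    · rw [show 2 * b - (b + 1) = b - 1 by ring, add_comm]
    · rw [show 2 * b - (b - 1) = b + 1 by ring]

end potential

/-- The vertices `u` and `w` form the boundary of a mod 2 chain of edges of `E`. -/
def Homologous (E : Set Cell) (u w : Cell) : Prop :=
  ∃ z : Cell → ZMod 2, (∀ c ∉ E, z c = 0) ∧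
    ∀ v, IsVert v → boundary z v = (Pi.single u 1 + Pi.single w 1 : Cell → ZMod 2) v

namespace Homologous

variable {E E' : Set Cell} {d e u v w : Cell}

@[refl] lemma refl (E : Set Cell) (u : Cell) : Homologous E u u :=
  ⟨0, fun _ _ => rfl, fun v _ => by simp [boundary, CharTwo.add_self_eq_zero]⟩

lemma symm (h : Homologous E u w) : Homologous E w u := by
  obtain ⟨z, hzE, hz⟩ := h
  exact ⟨z, hzE, fun v hv => by rw [hz v hv, add_comm]⟩

lemma mono (hE : E ⊆ E') (h : Homologous E u w) : Homologous E' u w := by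
  obtain ⟨z, hzE, hz⟩ := h
  exact ⟨z, fun c hc => hzE c fun h => hc (hE h), hz⟩

lemma trans (h : Homologous E u v) (h' : Homologous E v w) : Homologous E u w := by
  obtain ⟨z, hzE, hz⟩ := h
  obtain ⟨z', hzE', hz'⟩ := h'
  refine ⟨z + z', fun c hc => by simp [hzE c hc, hzE' c hc], fun x hx => ?_⟩
  have cancel : ∀ a b c : ZMod 2, a + b + (b + c) = a + c := by decide
  rw [boundary_add, hz x hx, hz' x hx]
  exact cancel _ _ _

lemma of_isEdge (he : IsEdge e) (heE : e ∈ E) (hu : IsVert u) (hw : IsVert w) (hue : u ≤ e)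
    (hwe : w ≤ e) : Homologous E u w := by
  rcases he.eq_or_eq_opp_of_isVert hu hw hue hwe with rfl | rfl
  · exact refl E w
  · refine ⟨Pi.single e 1, fun c hc => Pi.single_eq_of_ne ?_ 1, fun v hv =>
      boundary_single he hu hue hv⟩
    rintro rfl
    exact hc heE

lemma of_le (hE : IsLowerSet E) (hd : d ∈ E) (hu : IsVert u) (hw : IsVert w) (hud : u ≤ d)
    (hwd : w ≤ d) : Homologous E u w := by
  obtain ⟨a, b⟩ := u
  obtain ⟨a', b'⟩ := w
  obtain ⟨x, y⟩ := d
  have horizontal : Homologous E ⟨a, b⟩ ⟨a', b⟩ := by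
    by_cases h : a = a'
    · rw [h]
    · refine of_isEdge (e := ⟨x, b⟩) ?_ (hE (b := ⟨x, b⟩) ?_ hd) hu ?_ ?_ ?_ <;>
        simp only [IsVert, IsEdge, Cell.le_iff_arith, true_or, true_and, and_true] at * <;> omega
  have vertical : Homologous E ⟨a', b⟩ ⟨a', b'⟩ := by
    by_cases h : b = b'
    · rw [h]
    · refine of_isEdge (e := ⟨a', y⟩) ?_ (hE (b := ⟨a', y⟩) ?_ hd) ?_ hw ?_ ?_ <;>
        simp only [IsVert, IsEdge, Cell.le_iff_arith, true_or, true_and, and_true] at * <;> omega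
  exact horizontal.trans vertical

lemma of_linked (hE : IsLowerSet E) {c : Cell} (h : Linked E c d) (hc : c ∈ E) (hu : IsVert u)
    (hw : IsVert w) (huc : u ≤ c) (hwd : w ≤ d) : Homologous E u w := by
  induction h generalizing u w with
  | rel c d h => exact of_le hE h.2.1 hu hw (huc.trans h.2.2) hwd
  | refl c => exact of_le hE hc hu hw huc hwd
  | symm d c h ih => exact (ih ((Linked.mem_iff h).2 hc) hw hu hwd huc).symm
  | trans c e d h _ ih ih' =>
    obtain ⟨v, hv, hve⟩ := exists_isVert_le e
    exact (ih hc hu hv huc hve).trans (ih' ((Linked.mem_iff h).1 hc) hv hw hve hwd)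

/-- Discrete Jordan curve theorem: the two sides of an edge of a cycle are separated by a function
on the faces whose jumps form the cycle. -/
lemma exists_separating (hE : E.Finite) (he : IsEdge e) (heE : e ∈ E) (hu : IsVert u)
    (hue : u ≤ e) (h : Homologous (E \ {e}) u (e.opp u)) :
    ∃ f : Cell → ZMod 2, ConstAcross f Eᶜ ∧ ∀ s, IsFace s → e ≤ s → f s ≠ f (e.opp s) := by
  obtain ⟨z, hzE, hz⟩ := h
  obtain ⟨b, hb⟩ := (hE.image Cell.x).bddBelow
  have hbE : ∀ c : Cell, c.x < 2 * (b / 2) → c ∉ E := fun c hc hcE => by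
    have := hb (mem_image_of_mem Cell.x hcE)
    omega
  have hsupp : ∀ c ∉ E, (z + Pi.single e 1 : Cell → ZMod 2) c = 0 := fun c hc => by
    rw [Pi.add_apply, hzE c fun h => hc h.1,
      Pi.single_eq_of_ne (by rintro rfl; exact hc heE), add_zero]
  obtain ⟨f, hf⟩ := exists_coboundary_eq (z := z + Pi.single e 1)
    (fun c hc => hsupp c (hbE c hc)) fun v hv => by
      rw [boundary_add, hz v hv, boundary_single he hu hue hv, CharTwo.add_self_eq_zero]
  refine ⟨f, fun e' he'E he' s hs hes => ?_, fun s hs hes heq => ?_⟩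
  · exact CharTwo.add_eq_zero.1 ((hf e' he' s hs hes).trans (hsupp e' he'E))
  · have hfe := hf e he s hs hes
    rw [Pi.add_apply, hzE e fun h => h.2 rfl, heq, CharTwo.add_self_eq_zero] at hfe
    simp at hfe

end Homologous

/-! ### Collapses -/

/-- The cell `t` of `X` is a free face of `s`: it has codimension one in `s` and lies in no other
cell of `X`. -/
structure IsFreeFace (X : Set Cell) (t s : Cell) : Prop where
  mem : s ∈ X
  lt : t < s
  codim_one : t.x = s.x ∨ t.y = s.y
  eq_or_eq : ∀ d ∈ X, t ≤ d → d = t ∨ d = s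

/-- `X'` arises from `X` by removing a cell together with a free face of it. -/
def ElementaryCollapse (X X' : Set Cell) : Prop := ∃ t s, IsFreeFace X t s ∧ X' = X \ {t, s}

/-- `X'` arises from `X` by a sequence of elementary collapses. -/
def Collapses : Set Cell → Set Cell → Prop := Relation.ReflTransGen ElementaryCollapse

/-- Pushing `c` parallel to the facet `t` of `s` leads to the opposite facet within the boundary. -/
lemma Cell.exists_path_to_opp {c s t : Cell} (hts : t < s) (hcodim : t.x = s.x ∨ t.y = s.y)
    (hcs : c ≤ s) (hct : c ≠ t) (hne : c ≠ s) :
    ∃ m m', c ≤ m ∧ m' ≤ m ∧ m' ≤ s.opp t ∧ m ≤ s ∧ m ≠ t ∧ m ≠ s := by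
  have hle := hts.le
  have hts' := hts.ne
  rcases hcodim with h | h
  · by_cases hc : c.y = t.y
    · refine ⟨⟨c.x, s.y⟩, ⟨c.x, 2 * s.y - t.y⟩, ?_⟩
      simp only [Cell.le_iff_arith, Cell.opp, ne_eq, Cell.ext_iff, true_or, true_and, and_true] at *
      omega
    · refine ⟨c, ⟨c.x, 2 * s.y - t.y⟩, ?_⟩
      simp only [Cell.le_iff_arith, Cell.opp, ne_eq, Cell.ext_iff, true_or, true_and, and_true] at *
      omega
  · by_cases hc : c.x = t.x
    · refine ⟨⟨s.x, c.y⟩, ⟨2 * s.x - t.x, c.y⟩, ?_⟩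
      simp only [Cell.le_iff_arith, Cell.opp, ne_eq, Cell.ext_iff, true_or, true_and, and_true] at *
      omega
    · refine ⟨c, ⟨2 * s.x - t.x, c.y⟩, ?_⟩
      simp only [Cell.le_iff_arith, Cell.opp, ne_eq, Cell.ext_iff, true_or, true_and, and_true] at *
      omega

namespace IsFreeFace

variable {X : Set Cell} {t s c d : Cell}

lemma diff_subset_of_notMem {Y : Set Cell} (h : IsFreeFace X t s) (hY : IsLowerSet Y)
    (hYX : Y ⊆ X) (ht : t ∉ Y) : Y ⊆ X \ {t, s} := by
  refine fun c hc => ⟨hYX hc, ?_⟩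
  rintro (rfl | rfl)
  · exact ht hc
  · exact ht (hY h.lt.le hc)

lemma diff_ssubset (h : IsFreeFace X t s) : X \ {t, s} ⊂ X :=
  ⟨sdiff_subset, fun hX => (hX h.mem).2 (Or.inr rfl)⟩

lemma isLowerSet_diff (h : IsFreeFace X t s) (hX : IsLowerSet X) : IsLowerSet (X \ {t, s}) := by
  refine fun d c hcd hd => ⟨hX hcd hd.1, ?_⟩
  rintro (rfl | rfl)
  · exact hd.2 (h.eq_or_eq d hd.1 hcd)
  · exact hd.2 (h.eq_or_eq d hd.1 (h.lt.le.trans hcd))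

lemma linked_opp (h : IsFreeFace X t s) (hX : IsLowerSet X) (hcs : c ≤ s)
    (hc : c ∉ ({t, s} : Set Cell)) : Linked (X \ {t, s}) c (s.opp t) := by
  obtain ⟨hct, hne⟩ := not_or.1 hc
  obtain ⟨m, m', hcm, hm'm, hm't', hms, hmt, hmne⟩ :=
    Cell.exists_path_to_opp h.lt h.codim_one hcs hct hne
  have ht' : s.opp t ∈ X \ {t, s} := by
    refine ⟨hX (Cell.opp_le h.lt.le) h.mem, not_or.2 ⟨Cell.opp_ne h.lt.ne, fun heq => h.lt.ne ?_⟩⟩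
    rw [← Cell.opp_opp s t, show s.opp t = s from heq]
    simp only [Cell.ext_iff, Cell.opp]
    omega
  have hmX : m ∈ X \ {t, s} := ⟨hX hms h.mem, not_or.2 ⟨hmt, hmne⟩⟩
  have hlower := h.isLowerSet_diff hX
  exact (Linked.of_le (hlower hcm hmX) hmX hcm).trans <|
    (Linked.of_le (hlower hm'm hmX) hmX hm'm).symm.trans <|
    Linked.of_le (hlower hm'm hmX) ht' hm't'

open Classical in
lemma linked_diff (h : IsFreeFace X t s) (hX : IsLowerSet X) (hcd : Linked X c d)
    (hc : c ∉ ({t, s} : Set Cell)) (hd : d ∉ ({t, s} : Set Cell)) : Linked (X \ {t, s}) c d := by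
  let r : Cell → Cell := fun c => if c ∈ ({t, s} : Set Cell) then s.opp t else c
  have hr : ∀ c ∈ X, ∀ d ∈ X, c ≤ d → Linked (X \ {t, s}) (r c) (r d) := by
    intro c hcX d hdX hcd
    by_cases hd : d ∈ ({t, s} : Set Cell)
    · have hds : d ≤ s := by rcases hd with rfl | rfl; exacts [h.lt.le, le_rfl]
      by_cases hc : c ∈ ({t, s} : Set Cell)
      · simp only [r, if_pos hc, if_pos hd, Linked.refl]
      · simpa only [r, if_neg hc, if_pos hd] using h.linked_opp hX (hcd.trans hds) hc
    · have hc : c ∉ ({t, s} : Set Cell) := fun hc => hd <| by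
        rcases hc with rfl | rfl
        · exact h.eq_or_eq d hdX hcd
        · exact h.eq_or_eq d hdX (h.lt.le.trans hcd)
      simpa only [r, if_neg hc, if_neg hd] using
        Linked.of_le (S := X \ {t, s}) ⟨hcX, hc⟩ ⟨hdX, hd⟩ hcd
  simpa only [r, if_neg hc, if_neg hd] using hcd.map hr

end IsFreeFace

/-! ### Regular pairs of cell complexes -/

/-- The face `t` outside `X` is adjacent to the component of `c` in `X \ Z` along an edge. -/
def Borders (X Z : Set Cell) (c t : Cell) : Prop :=
  ∃ e ∈ X \ Z, IsEdge e ∧ Linked (X \ Z) c e ∧ IsFace t ∧ e ≤ t ∧ t ∉ X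

/-- The vertex `y` of `X ∩ Z` is an end of an edge in the component of `c` in `X \ Z`. -/
def Touches (X Z : Set Cell) (c y : Cell) : Prop :=
  ∃ e ∈ X \ Z, IsEdge e ∧ Linked (X \ Z) c e ∧ IsVert y ∧ y ≤ e ∧ y ∈ X ∩ Z

/-- Two closed sets of cells such that every component of `X \ Z` borders faces of exactly one
component of the complement of `X ∪ Z` and touches exactly one component of `X ∩ Z`. -/
structure IsRegularCellPair (π : Push) (X Z : Set Cell) : Prop where
  finite : X.Finite
  isLowerSet_left : IsLowerSet X
  isLowerSet_right : IsLowerSet Z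
  isStable_left : IsStable π X
  isStable_right : IsStable π Z
  exists_borders : ∀ c ∈ X \ Z, ∃ t, Borders X Z c t
  linked_of_borders : ∀ c t t', Borders X Z c t → Borders X Z c t' → Linked (X ∪ Z)ᶜ t t'
  exists_linked : ∀ c ∈ X \ Z, ∃ y ∈ X ∩ Z, Linked X c y
  linked_of_touches : ∀ c y y', Touches X Z c y → Touches X Z c y' → Linked (X ∩ Z) y y'

section

variable {X Z : Set Cell} {c d t y : Cell}

lemma Borders.of_linked (hcd : Linked (X \ Z) c d) (h : Borders X Z d t) : Borders X Z c t := by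
  obtain ⟨e, he, hedge, hde, ht⟩ := h
  exact ⟨e, he, hedge, hcd.trans hde, ht⟩

lemma Touches.of_linked (hcd : Linked (X \ Z) c d) (h : Touches X Z d y) : Touches X Z c y := by
  obtain ⟨e, he, hedge, hde, hy⟩ := h
  exact ⟨e, he, hedge, hcd.trans hde, hy⟩

end

/-- A stage `X'` of the collapse of `X` onto `X ∩ Z`. The condition `sided` says that no closed
curve in `X'` separates a face which has been removed from the complement of `X`. -/
structure IsCollapseStage (X Z X' : Set Cell) : Prop where
  inter_subset : X ∩ Z ⊆ X'
  subset : X' ⊆ X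
  isLowerSet : IsLowerSet X'
  exists_linked : ∀ c ∈ X', ∃ y ∈ X ∩ Z, Linked X' c y
  sided : ∀ f : Cell → ZMod 2, ConstAcross f X'ᶜ → ∀ r ∈ X \ X', IsFace r →
    ∃ t, Borders X Z r t ∧ f r = f t

lemma IsCollapseStage.mem_diff {X Z X' : Set Cell} (hX' : IsCollapseStage X Z X') {c : Cell}
    (hc : c ∈ X') (hcY : c ∉ X ∩ Z) : c ∈ X \ Z :=
  ⟨hX'.subset hc, fun h => hcY ⟨hX'.subset hc, h⟩⟩

namespace IsRegularCellPair

variable {π : Push} {X Z X' : Set Cell} {c s t : Cell}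

lemma isLowerSet_inter (H : IsRegularCellPair π X Z) : IsLowerSet (X ∩ Z) :=
  H.isLowerSet_left.inter H.isLowerSet_right

lemma ordConnected_diff (H : IsRegularCellPair π X Z) : (X \ Z).OrdConnected :=
  H.isLowerSet_left.ordConnected.inter H.isLowerSet_right.compl.ordConnected

lemma ordConnected_compl_union (H : IsRegularCellPair π X Z) : (X ∪ Z)ᶜ.OrdConnected :=
  (H.isLowerSet_left.union H.isLowerSet_right).compl.ordConnected

lemma isCollapseStage_self (H : IsRegularCellPair π X Z) : IsCollapseStage X Z X where
  inter_subset := inter_subset_left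
  subset := subset_rfl
  isLowerSet := H.isLowerSet_left
  exists_linked c hc := by
    by_cases hcZ : c ∈ Z
    · exact ⟨c, ⟨hc, hcZ⟩, Linked.refl X c⟩
    · exact H.exists_linked c ⟨hc, hcZ⟩
  sided _ _ r hr := absurd hr.1 hr.2

lemma isCollapseStage_diff (H : IsRegularCellPair π X Z) (hX' : IsCollapseStage X Z X')
    (h : IsFreeFace X' t s) (ht : t ∉ X ∩ Z)
    (hs : ∀ f : Cell → ZMod 2, ConstAcross f (X' \ {t, s})ᶜ → ∀ r ∈ ({t, s} : Set Cell),
      IsFace r → ∃ t', Borders X Z r t' ∧ f r = f t') :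
    IsCollapseStage X Z (X' \ {t, s}) where
  inter_subset := h.diff_subset_of_notMem H.isLowerSet_inter hX'.inter_subset ht
  subset := sdiff_subset.trans hX'.subset
  isLowerSet := h.isLowerSet_diff hX'.isLowerSet
  exists_linked c hc := by
    obtain ⟨y, hy, hcy⟩ := hX'.exists_linked c hc.1
    exact ⟨y, hy, h.linked_diff hX'.isLowerSet hcy hc.2
      (h.diff_subset_of_notMem H.isLowerSet_inter hX'.inter_subset ht hy).2⟩
  sided f hf r hr hface := by
    by_cases hrX' : r ∈ X'
    · exact hs f hf r (not_not.1 fun hne => hr.2 ⟨hrX', hne⟩) hface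
    · exact hX'.sided f (hf.mono (compl_subset_compl.2 sdiff_subset)) r ⟨hr.1, hrX'⟩ hface

lemma exists_free_edge (H : IsRegularCellPair π X Z) (hX' : IsCollapseStage X Z X')
    (hs : IsFace s) (hsX' : s ∈ X') (hsZ : s ∉ Z) :
    ∃ e s, IsEdge e ∧ e ∉ Z ∧ IsFace s ∧ e ≤ s ∧ s ∈ X' ∧ e.opp s ∉ X' := by
  by_contra! hstuck
  have hf : ConstAcross (fun c => c ∈ X' \ Z ∧ IsFace c) (X \ Z) := by
    have key : ∀ e ∈ X \ Z, IsEdge e → ∀ s, IsFace s → e ≤ s → s ∈ X' → e.opp s ∈ X' \ Z :=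
      fun e heS he s hs hes hsX' => ⟨hstuck e s he heS.2 hs hes hsX',
        fun h => heS.2 (H.isLowerSet_right (Cell.le_opp hes) h)⟩
    refine fun e heS he s hs hes => propext ⟨fun h => ⟨key e heS he s hs hes h.1.1, hs.opp⟩, ?_⟩
    rintro ⟨h, -⟩
    simpa only [Cell.opp_opp, hs, and_true] using
      key e heS he _ hs.opp (Cell.le_opp hes) h.1
  obtain ⟨t, e, heS, he, hse, ht, het, htX⟩ := H.exists_borders s ⟨hX'.subset hsX', hsZ⟩
  have hface := Push.eq_of_linked hf (H.isStable_left.diff H.isStable_right) H.ordConnected_diff hse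
  rw [Push.cell_of_isFace hs] at hface
  have hpush : π.cell e ∈ X' := (hface.mp ⟨⟨hsX', hsZ⟩, hs⟩).1.1
  rcases he.eq_or_eq_opp_of_isFace (π.isFace_cell e) ht (π.le_cell e) het with rfl | rfl
  · exact htX (hX'.subset hpush)
  · exact htX (hX'.subset (hstuck e _ he heS.2 (π.isFace_cell e) (π.le_cell e) hpush))

lemma exists_collapse_of_isFace (H : IsRegularCellPair π X Z) (hX' : IsCollapseStage X Z X')
    (hc : IsFace c) (hcX' : c ∈ X') (hcZ : c ∉ Z) :
    ∃ t s, IsFreeFace X' t s ∧ IsCollapseStage X Z (X' \ {t, s}) := by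
  obtain ⟨e, s, he, heZ, hs, hes, hsX', hopp⟩ := H.exists_free_edge hX' hc hcX' hcZ
  have hfree : IsFreeFace X' e s :=
    { mem := hsX'
      lt := hes.lt_of_ne fun h => he.not_isFace (h ▸ hs)
      codim_one := by simp only [IsEdge, IsFace, Cell.le_iff_arith] at *; omega
      eq_or_eq := fun d hd hed => (he.eq_or_isFace_of_le hed).imp_right fun hface =>
        (he.eq_or_eq_opp_of_isFace hs hface hes hed).resolve_right (by rintro rfl; exact hopp hd) }
  have heS : e ∈ X \ Z := ⟨hX'.subset (hX'.isLowerSet hes hsX'), heZ⟩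
  have linked_of_mem : ∀ r ∈ X, e ≤ r → Linked (X \ Z) e r := fun r hr her =>
    Linked.of_le heS ⟨hr, fun h => heZ (H.isLowerSet_right her h)⟩ her
  refine ⟨e, s, hfree,
    H.isCollapseStage_diff hX' hfree (fun h => heZ h.2) fun f hf r hr hface => ?_⟩
  obtain rfl : r = s := hr.resolve_left (by rintro rfl; exact he.not_isFace hface)
  have hfe : f r = f (e.opp r) := hf e (fun h => h.2 (Or.inl rfl)) he r hs hes
  have hre : Linked (X \ Z) r e := (linked_of_mem r (hX'.subset hsX') hes).symm
  by_cases hoX : e.opp r ∈ X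
  · obtain ⟨t, hrt, hft⟩ := hX'.sided f (hf.mono (compl_subset_compl.2 sdiff_subset)) (e.opp r)
      ⟨hoX, hopp⟩ hs.opp
    exact ⟨t, hrt.of_linked (hre.trans (linked_of_mem _ hoX (Cell.le_opp hes))), hfe.trans hft⟩
  · exact ⟨e.opp r, ⟨e, heS, he, hre, hs.opp, Cell.le_opp hes, hoX⟩, hfe⟩

end IsRegularCellPair

/-! ### Pruning the remaining graph -/

lemma exists_rank {α : Type*} (R : α → α → Prop) (Y : Set α) :
    ∃ ρ : α → ℕ, (∀ y ∈ Y, ρ y = 0) ∧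
      ∀ v ∉ Y, (∃ y ∈ Y, Relation.ReflTransGen R v y) → ∃ w, R v w ∧ ρ w < ρ v := by
  let step : Set α → Set α := fun B => {v | ∃ w ∈ B, R v w}
  have reach : ∀ v, (∃ y ∈ Y, Relation.ReflTransGen R v y) → ∃ n, v ∈ step^[n] Y := by
    rintro v ⟨y, hy, hvy⟩
    induction hvy using Relation.ReflTransGen.head_induction_on with
    | refl => exact ⟨0, hy⟩
    | head hvw _ ih =>
      obtain ⟨n, hn⟩ := ih
      exact ⟨n + 1, by rw [Function.iterate_succ_apply']; exact ⟨_, hn, hvw⟩⟩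
  refine ⟨fun v => sInf {n | v ∈ step^[n] Y}, fun y hy => Nat.sInf_eq_zero.2 (Or.inl hy),
    fun v hv hreach => ?_⟩
  have hmem : v ∈ step^[sInf {n | v ∈ step^[n] Y}] Y :=
    Nat.sInf_mem (s := {n | v ∈ step^[n] Y}) (reach v hreach)
  cases hn : sInf {n | v ∈ step^[n] Y} with
  | zero => rw [hn] at hmem; exact absurd hmem hv
  | succ n =>
    rw [hn, Function.iterate_succ_apply'] at hmem
    obtain ⟨w, hw, hvw⟩ := hmem
    refine ⟨w, hvw, ?_⟩
    simp only [hn]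
    exact Nat.lt_succ_of_le (Nat.sInf_le (s := {n | w ∈ step^[n] Y}) hw)

/-- Going from a vertex to the other end of an edge of `X`. -/
def EdgeStep (X : Set Cell) (v w : Cell) : Prop := ∃ e ∈ X, IsEdge e ∧ v ≤ e ∧ w = e.opp v

lemma exists_reflTransGen_edgeStep {X Y : Set Cell} (hY : IsLowerSet Y)
    (hface : ∀ s ∈ X, IsFace s → s ∈ Y) {v y : Cell} (hv : IsVert v) (hy : y ∈ Y)
    (hvy : Linked X v y) : ∃ y ∈ Y, Relation.ReflTransGen (EdgeStep X) v y := by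
  let Reaches : Cell → Prop := fun c =>
    ∀ u, IsVert u → u ≤ c → ∃ y ∈ Y, Relation.ReflTransGen (EdgeStep X) u y
  have of_mem : ∀ c ∈ Y, Reaches c := fun c hc u _ huc => ⟨u, hY huc hc, .refl⟩
  have up : ∀ c ∈ X, ∀ d ∈ X, c ≤ d → Reaches c → Reaches d := by
    intro c _ d hd hcd hc
    rcases isFace_or_isEdge_or_isVert d with hd' | hd' | hd'
    · exact of_mem d (hface d hd hd')
    · rcases hd'.eq_or_isVert_of_le hcd with rfl | hc'
      · exact hc
      intro u hu hud
      obtain ⟨y, hy, hcy⟩ := hc c hc' le_rfl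
      rcases hd'.eq_or_eq_opp_of_isVert hu hc' hud hcd with rfl | rfl
      · exact ⟨y, hy, hcy⟩
      · exact ⟨y, hy, .head ⟨d, hd, hd', hud, rfl⟩ hcy⟩
    · rwa [← hd'.eq_of_le hcd]
  have hvy' : Reaches v = Reaches y := hvy.eq_of_forall_le fun c hc d hd hcd =>
    propext ⟨up c hc d hd hcd, fun h u hu huc => h u hu (huc.trans hcd)⟩
  exact hvy'.mpr (of_mem y hy) v hv le_rfl

namespace IsRegularCellPair

variable {π : Push} {X Z X' : Set Cell} {a e s v w : Cell}

/-- A vertex `w` other than `v` and not farther from `X ∩ Z` than `v` descends to `X ∩ Z` along a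
path avoiding `v`, hence avoiding every edge `a` at `v`. -/
lemma exists_touches_homologous (H : IsRegularCellPair π X Z) (hX' : IsCollapseStage X Z X')
    {ρ : Cell → ℕ} (hρ : ∀ v ∈ X', IsVert v → v ∉ X ∩ Z → ∃ w, EdgeStep X' v w ∧ ρ w < ρ v)
    (hv : IsVert v) (ha : IsEdge a) (hva : v ≤ a) (hw : IsVert w) (hne : w ≠ v) (hwv : ρ w ≤ ρ v)
    (he : IsEdge e) (heX' : e ∈ X') (heY : e ∉ X ∩ Z) (hwe : w ≤ e) :
    ∃ y, Touches X Z e y ∧ Homologous (X' \ {a}) w y := by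
  induction hn : ρ w using Nat.strong_induction_on generalizing w e with
  | _ n ih =>
  subst hn
  have heS : e ∈ X \ Z := hX'.mem_diff heX' heY
  by_cases hwY : w ∈ X ∩ Z
  · exact ⟨w, ⟨e, heS, he, Linked.refl _ e, hw, hwe, hwY⟩, Homologous.refl _ w⟩
  have hwX' : w ∈ X' := hX'.isLowerSet hwe heX'
  have hwS : w ∈ X \ Z := hX'.mem_diff hwX' hwY
  obtain ⟨w', ⟨e', he'X', he', hwe', rfl⟩, hlt⟩ := hρ w hwX' hw hwY
  have he'Y : e' ∉ X ∩ Z := fun h => hwY (H.isLowerSet_inter hwe' h)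
  have hne' : e'.opp w ≠ v := by rintro rfl; omega
  obtain ⟨y, hy, hwy⟩ := ih _ hlt hw.opp hne' (hlt.le.trans hwv) he' he'X' he'Y
    (Cell.opp_le hwe') rfl
  have hee' : Linked (X \ Z) e e' :=
    (Linked.of_le hwS heS hwe).symm.trans (Linked.of_le hwS (hX'.mem_diff he'X' he'Y) hwe')
  have he'a : e' ∈ X' \ {a} := by
    refine ⟨he'X', ?_⟩
    rintro rfl
    exact (ha.eq_or_eq_opp_of_isVert hw hv hwe' hva).elim (fun h => hne h.symm)
      fun h => hne' h.symm
  exact ⟨y, hy.of_linked hee',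
    (Homologous.of_isEdge he' he'a hw hw.opp hwe' (Cell.opp_le hwe')).trans hwy⟩

lemma exists_rank_edgeStep (H : IsRegularCellPair π X Z) (hX' : IsCollapseStage X Z X')
    (hface : ∀ s ∈ X', IsFace s → s ∈ X ∩ Z) :
    ∃ ρ : Cell → ℕ, (∀ y ∈ X ∩ Z, ρ y = 0) ∧
      ∀ v ∈ X', IsVert v → v ∉ X ∩ Z → ∃ w, EdgeStep X' v w ∧ ρ w < ρ v := by
  obtain ⟨ρ, hρ0, hρ⟩ := exists_rank (EdgeStep X') (X ∩ Z)
  refine ⟨ρ, hρ0, fun v hvX' hv hvY => ?_⟩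
  obtain ⟨y, hy, hvy⟩ := hX'.exists_linked v hvX'
  exact hρ v hvY (exists_reflTransGen_edgeStep H.isLowerSet_inter hface hv hy hvy)

/-- At a vertex `v` farthest from `X ∩ Z`, one edge leads closer to `X ∩ Z`, and the other end of
any second edge `a` is not farther than `v`; so both ends of `a` descend to `X ∩ Z` without `a`. -/
lemma exists_bypassed_edge_of_isVert (H : IsRegularCellPair π X Z) (hX' : IsCollapseStage X Z X')
    (hface : ∀ s ∈ X', IsFace s → s ∈ X ∩ Z) (hvert : ∃ v ∈ X', IsVert v ∧ v ∉ X ∩ Z)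
    (hstuck : ∀ v e, IsVert v → v ∉ X ∩ Z → IsEdge e → v ≤ e → e ∈ X' →
      ∃ a ∈ X', IsEdge a ∧ v ≤ a ∧ a ≠ e) :
    ∃ a ∈ X', a ∉ X ∩ Z ∧ IsEdge a ∧ ∀ w, IsVert w → w ≤ a →
      ∃ y, Touches X Z a y ∧ Homologous (X' \ {a}) w y := by
  obtain ⟨ρ, hρ0, hρ⟩ := H.exists_rank_edgeStep hX' hface
  have hfin : {v ∈ X' | IsVert v ∧ v ∉ X ∩ Z}.Finite :=
    H.finite.subset fun v hv => hX'.subset hv.1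
  obtain ⟨v, ⟨hvX', hv, hvY⟩, hmax⟩ := hfin.exists_maximalFor ρ _ hvert
  obtain ⟨w₁, ⟨e, heX', he, hve, rfl⟩, hlt⟩ := hρ v hvX' hv hvY
  obtain ⟨a, haX', ha, hva, hae⟩ := hstuck v e hv hvY he hve heX'
  have notMem_of_ge : ∀ d, v ≤ d → d ∉ X ∩ Z := fun d hvd h => hvY (H.isLowerSet_inter hvd h)
  have descend : ∀ d, IsEdge d → d ∈ X' → v ≤ d → ρ (d.opp v) ≤ ρ v →
      ∃ y, Touches X Z d y ∧ Homologous (X' \ {a}) (d.opp v) y := fun d hd hdX' hvd hle =>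
    H.exists_touches_homologous hX' hρ hv ha hva hv.opp
      (Cell.opp_ne fun h => hd.not_isVert (h ▸ hv)) hle hd hdX' (notMem_of_ge d hvd)
      (Cell.opp_le hvd)
  have hvS := hX'.mem_diff hvX' hvY
  have hlink : Linked (X \ Z) a e :=
    (Linked.of_le hvS (hX'.mem_diff haX' (notMem_of_ge a hva)) hva).symm.trans
      (Linked.of_le hvS (hX'.mem_diff heX' (notMem_of_ge e hve)) hve)
  refine ⟨a, haX', notMem_of_ge a hva, ha, fun w hw hwa => ?_⟩
  rcases ha.eq_or_eq_opp_of_isVert hv hw hva hwa with rfl | rfl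
  · obtain ⟨y, hy, hwy⟩ := descend e he heX' hve hlt.le
    have hea : e ∈ X' \ {a} := ⟨heX', hae.symm⟩
    exact ⟨y, hy.of_linked hlink,
      (Homologous.of_isEdge he hea hw hw.opp hve (Cell.opp_le hve)).trans hwy⟩
  · refine descend a ha haX' hva ?_
    by_cases hoY : a.opp v ∈ X ∩ Z
    · simp only [hρ0 _ hoY, Nat.zero_le]
    · exact (le_total (ρ v) (ρ (a.opp v))).elim
        (hmax ⟨hX'.isLowerSet (Cell.opp_le hva) haX', hw, hoY⟩) id

lemma exists_bypassed_edge (H : IsRegularCellPair π X Z) (hX' : IsCollapseStage X Z X')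
    (hface : ∀ s ∈ X', IsFace s → s ∈ X ∩ Z) (hne : ∃ c ∈ X', c ∉ X ∩ Z)
    (hstuck : ∀ v e, IsVert v → v ∉ X ∩ Z → IsEdge e → v ≤ e → e ∈ X' →
      ∃ a ∈ X', IsEdge a ∧ v ≤ a ∧ a ≠ e) :
    ∃ a ∈ X', a ∉ X ∩ Z ∧ IsEdge a ∧ ∀ w, IsVert w → w ≤ a →
      ∃ y, Touches X Z a y ∧ Homologous (X' \ {a}) w y := by
  by_cases hvert : ∃ v ∈ X', IsVert v ∧ v ∉ X ∩ Z
  · exact H.exists_bypassed_edge_of_isVert hX' hface hvert hstuck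
  push Not at hvert
  obtain ⟨a, haX', haY⟩ := hne
  have ha : IsEdge a := ((isFace_or_isEdge_or_isVert a).resolve_left
    fun h => haY (hface a haX' h)).resolve_right fun h => haY (hvert a haX' h)
  exact ⟨a, haX', haY, ha, fun w hw hwa => ⟨w, ⟨a, hX'.mem_diff haX' haY, ha, Linked.refl _ a, hw,
    hwa, hvert w (hX'.isLowerSet hwa haX') hw⟩, Homologous.refl _ w⟩⟩

lemma exists_borders_of_isEdge (H : IsRegularCellPair π X Z) (hX' : IsCollapseStage X Z X')
    (hface : ∀ s ∈ X', IsFace s → s ∈ X ∩ Z) (ha : IsEdge a) (haX' : a ∈ X') (haY : a ∉ X ∩ Z)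
    {f : Cell → ZMod 2} (hf : ConstAcross f X'ᶜ) (hs : IsFace s) (has : a ≤ s) :
    ∃ t, Borders X Z a t ∧ f s = f t := by
  have haS : a ∈ X \ Z := hX'.mem_diff haX' haY
  by_cases hsX : s ∈ X
  · have hsX' : s ∉ X' := fun h => haY (H.isLowerSet_inter has (hface s h hs))
    obtain ⟨t, hst, hft⟩ := hX'.sided f hf s ⟨hsX, hsX'⟩ hs
    have hsS : s ∈ X \ Z := ⟨hsX, fun h => haS.2 (H.isLowerSet_right has h)⟩
    exact ⟨t, hst.of_linked (Linked.of_le haS hsS has), hft⟩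
  · exact ⟨s, ⟨a, haS, ha, Linked.refl _ a, hs, has, hsX⟩, rfl⟩

/-- A bypassed edge would lie on a cycle through the component of `X ∩ Z` which it touches, and this
cycle would separate the component of the complement of `X ∪ Z` on its two sides. -/
lemma not_bypassed (H : IsRegularCellPair π X Z) (hX' : IsCollapseStage X Z X')
    (hface : ∀ s ∈ X', IsFace s → s ∈ X ∩ Z) (ha : IsEdge a) (haX' : a ∈ X') (haY : a ∉ X ∩ Z) :
    ¬∀ w, IsVert w → w ≤ a → ∃ y, Touches X Z a y ∧ Homologous (X' \ {a}) w y := by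
  intro hbypass
  obtain ⟨v, hv, hva⟩ := exists_isVert_le a
  obtain ⟨y, hay, hvy⟩ := hbypass v hv hva
  obtain ⟨y', hay', hvy'⟩ := hbypass (a.opp v) hv.opp (Cell.opp_le hva)
  have hyy' : Homologous (X' \ {a}) y y' := by
    have hlink := H.linked_of_touches a y y' hay hay'
    obtain ⟨-, -, -, -, hy, -, hyY⟩ := hay
    obtain ⟨-, -, -, -, hy', -, -⟩ := hay'
    exact (Homologous.of_linked H.isLowerSet_inter hlink hyY hy hy' le_rfl le_rfl).mono
      fun c hc => ⟨hX'.inter_subset hc, by rintro rfl; exact haY hc⟩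
  obtain ⟨f, hf, hsep⟩ := Homologous.exists_separating (H.finite.subset hX'.subset) ha haX' hv hva
    (hvy.trans (hyy'.trans hvy'.symm))
  obtain ⟨s, hs, has⟩ := ha.exists_isFace_ge
  obtain ⟨t, hat, hst⟩ := H.exists_borders_of_isEdge hX' hface ha haX' haY hf hs has
  obtain ⟨t', hat', hst'⟩ :=
    H.exists_borders_of_isEdge hX' hface ha haX' haY hf hs.opp (Cell.le_opp has)
  have hlink := H.linked_of_borders a t t' hat hat'
  have hX'X : X' ⊆ X ∪ Z := hX'.subset.trans subset_union_left
  have hcross := Push.eq_of_linked (hf.mono (compl_subset_compl.2 hX'X))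
    (H.isStable_left.union H.isStable_right).compl H.ordConnected_compl_union hlink
  obtain ⟨-, -, -, -, ht, -⟩ := hat
  obtain ⟨-, -, -, -, ht', -⟩ := hat'
  rw [Push.cell_of_isFace ht, Push.cell_of_isFace ht'] at hcross
  exact hsep s hs has (hst.trans (hcross.trans hst'.symm))

lemma exists_collapse_of_forall_isFace (H : IsRegularCellPair π X Z)
    (hX' : IsCollapseStage X Z X') (hface : ∀ s ∈ X', IsFace s → s ∈ X ∩ Z)
    (hne : ∃ c ∈ X', c ∉ X ∩ Z) :
    ∃ t s, IsFreeFace X' t s ∧ IsCollapseStage X Z (X' \ {t, s}) := by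
  obtain ⟨v, e, hv, hvY, he, hve, heX', huniq⟩ : ∃ v e, IsVert v ∧ v ∉ X ∩ Z ∧ IsEdge e ∧ v ≤ e ∧
      e ∈ X' ∧ ∀ a ∈ X', IsEdge a → v ≤ a → a = e := by
    by_contra! hstuck
    obtain ⟨a, haX', haY, ha, hbypass⟩ := H.exists_bypassed_edge hX' hface hne hstuck
    exact H.not_bypassed hX' hface ha haX' haY hbypass
  have hfree : IsFreeFace X' v e :=
    { mem := heX'
      lt := hve.lt_of_ne fun h => he.not_isVert (h ▸ hv)
      codim_one := by simp only [IsEdge, IsVert, Cell.le_iff_arith] at *; omega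
      eq_or_eq := fun d hd hvd => (hv.eq_or_isEdge_or_isFace_of_le hvd).imp_right fun h =>
        h.elim (fun hd' => huniq d hd hd' hvd) fun hd' =>
          absurd (H.isLowerSet_inter hvd (hface d hd hd')) hvY }
  refine ⟨v, e, hfree, H.isCollapseStage_diff hX' hfree hvY fun f _ r hr hr' => ?_⟩
  rcases hr with rfl | rfl
  · exact absurd hv hr'.not_isVert
  · exact absurd hr' he.not_isFace

theorem collapses (H : IsRegularCellPair π X Z) : Collapses X (X ∩ Z) := by
  suffices h : ∀ n X', X'.ncard = n → IsCollapseStage X Z X' → Collapses X' (X ∩ Z) from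
    h _ X rfl H.isCollapseStage_self
  intro n
  induction n using Nat.strong_induction_on with
  | _ n ih =>
  rintro X' rfl hX'
  by_cases hne : ∃ c ∈ X', c ∉ X ∩ Z
  · obtain ⟨t, s, hfree, hstage⟩ :
        ∃ t s, IsFreeFace X' t s ∧ IsCollapseStage X Z (X' \ {t, s}) := by
      by_cases hface : ∀ s ∈ X', IsFace s → s ∈ X ∩ Z
      · exact H.exists_collapse_of_forall_isFace hX' hface hne
      · push Not at hface
        obtain ⟨s, hsX', hs, hsY⟩ := hface
        exact H.exists_collapse_of_isFace hX' hs hsX' (hX'.mem_diff hsX' hsY).2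
    have hlt := Set.ncard_lt_ncard hfree.diff_ssubset (H.finite.subset hX'.subset)
    exact .head ⟨t, s, hfree, rfl⟩ (ih _ hlt _ rfl hstage)
  · push Not at hne
    rw [hX'.inter_subset.antisymm hne]
    exact .refl

end IsRegularCellPair

/-! ### Grids -/

/-- A locally finite family of lines `line k` on the real axis, with the function numbering the
lines and the gaps between them: `idx x = 2 * k` on the line `k`, and `idx x = 2 * k + 1` between
the lines `k` and `k + 1`. The same family is used for both coordinates of the plane. -/
structure Grid where
  line : ℤ → ℝ
  idx : ℝ → ℤ
  two_mul_le_idx : ∀ {k x}, 2 * k ≤ idx x ↔ line k ≤ x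
  idx_le_two_mul : ∀ {k x}, idx x ≤ 2 * k ↔ x ≤ line k

namespace Grid

variable (g : Grid) {S : Set Cell} {x y : Plane}

lemma idx_line (k : ℤ) : g.idx (g.line k) = 2 * k :=
  le_antisymm (g.idx_le_two_mul.2 le_rfl) (g.two_mul_le_idx.2 le_rfl)

lemma line_lt_line {k m : ℤ} : g.line k < g.line m ↔ k < m := by
  rw [← not_le, ← not_le, ← g.two_mul_le_idx, g.idx_line]; omega

lemma idx_eq_two_mul {k : ℤ} {t : ℝ} : g.idx t = 2 * k ↔ t = g.line k := by
  rw [le_antisymm_iff, le_antisymm_iff, g.idx_le_two_mul, g.two_mul_le_idx]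

lemma idx_eq_two_mul_add_one {k : ℤ} {t : ℝ} :
    g.idx t = 2 * k + 1 ↔ t ∈ Ioo (g.line k) (g.line (k + 1)) := by
  rw [mem_Ioo, ← not_le, ← not_le, ← g.idx_le_two_mul, ← g.two_mul_le_idx]; omega

lemma incident_two_mul_add_one_iff {k : ℤ} {t : ℝ} :
    Incident (g.idx t) (2 * k + 1) ↔ t ∈ Icc (g.line k) (g.line (k + 1)) := by
  rw [mem_Icc, ← g.two_mul_le_idx, ← g.idx_le_two_mul, Incident]; omega

lemma preimage_idx_two_mul (k : ℤ) : g.idx ⁻¹' {2 * k} = {g.line k} :=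
  Set.ext fun _ => g.idx_eq_two_mul

lemma preimage_idx_two_mul_add_one (k : ℤ) :
    g.idx ⁻¹' {2 * k + 1} = Ioo (g.line k) (g.line (k + 1)) :=
  Set.ext fun _ => g.idx_eq_two_mul_add_one

lemma convex_preimage_idx (a : ℤ) : Convex ℝ (g.idx ⁻¹' {a}) := by
  obtain ⟨k, rfl | rfl⟩ := Int.even_or_odd' a
  · rw [preimage_idx_two_mul]; exact convex_singleton _
  · rw [preimage_idx_two_mul_add_one]; exact convex_Ioo _ _

lemma infinite_preimage_idx {a : ℤ} (ha : a % 2 = 1) : (g.idx ⁻¹' {a}).Infinite := by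
  obtain ⟨k, rfl⟩ := Int.odd_iff.2 ha
  rw [preimage_idx_two_mul_add_one]
  exact Ioo_infinite (g.line_lt_line.2 (lt_add_one k))

lemma idx_surjective : Function.Surjective g.idx := by
  intro a
  obtain ⟨k, rfl | rfl⟩ := Int.even_or_odd' a
  · exact ⟨_, g.idx_line k⟩
  · exact (g.infinite_preimage_idx (by omega)).nonempty

lemma closure_preimage_idx (a : ℤ) : closure (g.idx ⁻¹' {a}) = {t | Incident (g.idx t) a} := by
  obtain ⟨k, rfl | rfl⟩ := Int.even_or_odd' a
  · ext t
    rw [preimage_idx_two_mul, closure_singleton, mem_singleton_iff, ← g.idx_eq_two_mul]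
    simp only [Incident, mem_ofPred_eq]
    omega
  · ext t
    rw [preimage_idx_two_mul_add_one, closure_Ioo (g.line_lt_line.2 (lt_add_one k)).ne]
    exact g.incident_two_mul_add_one_iff.symm

lemma eventually_incident (t : ℝ) : ∀ᶠ u in nhds t, Incident (g.idx t) (g.idx u) := by
  obtain ⟨k, hk | hk⟩ := Int.even_or_odd' (g.idx t)
  · have ht : t ∈ Ioo (g.line (k - 1)) (g.line (k + 1)) := by
      rw [g.idx_eq_two_mul.1 hk, mem_Ioo, g.line_lt_line, g.line_lt_line]; omega
    filter_upwards [Ioo_mem_nhds ht.1 ht.2] with u hu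
    rw [mem_Ioo, ← not_le, ← not_le, ← g.idx_le_two_mul, ← g.two_mul_le_idx] at hu
    simp only [Incident]
    omega
  · have ht := g.idx_eq_two_mul_add_one.1 hk
    filter_upwards [Ioo_mem_nhds ht.1 ht.2] with u hu
    exact Or.inl (hk.trans (g.idx_eq_two_mul_add_one.2 hu).symm)

/-- The cell of the grid containing a point of the plane. A set of cells is realized in the plane by
its preimage. -/
def cellOf (x : Plane) : Cell := ⟨g.idx (x 0), g.idx (x 1)⟩

lemma cellOf_surjective : Function.Surjective g.cellOf := by
  intro c
  obtain ⟨a, ha⟩ := g.idx_surjective c.x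
  obtain ⟨b, hb⟩ := g.idx_surjective c.y
  exact ⟨![a, b], Cell.ext ha hb⟩

lemma preimage_cellOf_singleton (c : Cell) :
    g.cellOf ⁻¹' {c} = univ.pi ![g.idx ⁻¹' {c.x}, g.idx ⁻¹' {c.y}] := by
  ext x
  simp [cellOf, Cell.ext_iff]

lemma convex_preimage_cellOf (c : Cell) : Convex ℝ (g.cellOf ⁻¹' {c}) := by
  rw [preimage_cellOf_singleton]
  refine convex_pi fun i _ => ?_
  fin_cases i
  exacts [g.convex_preimage_idx _, g.convex_preimage_idx _]

lemma closure_preimage_cellOf_singleton (c : Cell) :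
    closure (g.cellOf ⁻¹' {c}) = g.cellOf ⁻¹' Iic c := by
  rw [preimage_cellOf_singleton, closure_pi_set]
  ext x
  simp [closure_preimage_idx, cellOf, Cell.le_iff]

lemma eventually_cellOf_le (x : Plane) : ∀ᶠ y in nhds x, g.cellOf x ≤ g.cellOf y :=
  ((continuous_apply (0 : Fin 2)).continuousAt.eventually (g.eventually_incident (x 0))).and
    ((continuous_apply (1 : Fin 2)).continuousAt.eventually (g.eventually_incident (x 1)))

lemma closure_preimage (S : Set Cell) : closure (g.cellOf ⁻¹' S) = g.cellOf ⁻¹' lowerClosure S := by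
  apply Subset.antisymm
  · intro x hx
    obtain ⟨y, hxy, hyS⟩ := mem_closure_iff_nhds.1 hx _ (g.eventually_cellOf_le x)
    exact ⟨_, hyS, hxy⟩
  · rintro x ⟨c, hcS, hxc⟩
    have hx : x ∈ closure (g.cellOf ⁻¹' {c}) := by
      rwa [closure_preimage_cellOf_singleton]
    exact closure_mono (preimage_mono (singleton_subset_iff.2 hcS)) hx

lemma isClosed_preimage (hS : IsLowerSet S) : IsClosed (g.cellOf ⁻¹' S) := by
  rw [← closure_eq_iff_isClosed, closure_preimage, hS.lowerClosure]

lemma linked_of_isPreconnected {U : Set Plane} (hU : IsPreconnected U)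
    (hUS : U ⊆ g.cellOf ⁻¹' S) (hx : x ∈ U) (hy : y ∈ U) : Linked S (g.cellOf x) (g.cellOf y) := by
  refine hU.induction₂ (fun x y => Linked S (g.cellOf x) (g.cellOf y)) (fun x hx => ?_)
    (fun _ _ _ _ _ _ => Linked.trans) (fun _ _ _ _ => Linked.symm) hx hy
  filter_upwards [mem_nhdsWithin_of_mem_nhds (g.eventually_cellOf_le x), self_mem_nhdsWithin] with
    y hxy hy
  exact Linked.of_le (hUS hx) (hUS hy) hxy

lemma connectedComponentIn_eq_of_le (hx : g.cellOf x ∈ S) (hy : g.cellOf y ∈ S)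
    (hxy : g.cellOf x ≤ g.cellOf y) :
    connectedComponentIn (g.cellOf ⁻¹' S) x = connectedComponentIn (g.cellOf ⁻¹' S) y := by
  have hpre : IsPreconnected (insert x (g.cellOf ⁻¹' {g.cellOf y})) := by
    refine (g.convex_preimage_cellOf _).isPreconnected.subset_closure (subset_insert _ _)
      (insert_subset ?_ subset_closure)
    rwa [closure_preimage_cellOf_singleton]
  have hsub : insert x (g.cellOf ⁻¹' {g.cellOf y}) ⊆ g.cellOf ⁻¹' S :=
    insert_subset hx (preimage_mono (singleton_subset_iff.2 hy))
  exact connectedComponentIn_eq <|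
    hpre.subset_connectedComponentIn (mem_insert _ _) hsub (mem_insert_of_mem _ rfl)

lemma connectedComponentIn_eq_of_linked (hx : g.cellOf x ∈ S)
    (hxy : Linked S (g.cellOf x) (g.cellOf y)) :
    connectedComponentIn (g.cellOf ⁻¹' S) x = connectedComponentIn (g.cellOf ⁻¹' S) y := by
  let point : Cell → Plane := Function.surjInv g.cellOf_surjective
  have cellOf_point : ∀ c, g.cellOf (point c) = c := Function.surjInv_eq g.cellOf_surjective
  have eq_point : ∀ z, g.cellOf z ∈ S → connectedComponentIn (g.cellOf ⁻¹' S) z =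
      connectedComponentIn (g.cellOf ⁻¹' S) (point (g.cellOf z)) := fun z hz =>
    g.connectedComponentIn_eq_of_le hz (by rwa [cellOf_point]) (cellOf_point _).ge
  rw [eq_point x hx, eq_point y (hxy.mem_iff.1 hx)]
  refine hxy.eq_of_forall_le (f := fun c => connectedComponentIn (g.cellOf ⁻¹' S) (point c))
    fun c hc d hd hcd => g.connectedComponentIn_eq_of_le (by rwa [cellOf_point])
      (by rwa [cellOf_point]) (by rwa [cellOf_point, cellOf_point])

lemma connectedComponentIn_preimage (hx : g.cellOf x ∈ S) :
    connectedComponentIn (g.cellOf ⁻¹' S) x = g.cellOf ⁻¹' {c | Linked S (g.cellOf x) c} := by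
  apply Subset.antisymm
  · exact fun y hy => g.linked_of_isPreconnected isPreconnected_connectedComponentIn
      (connectedComponentIn_subset _ x) (mem_connectedComponentIn hx) hy
  · intro y hy
    rw [g.connectedComponentIn_eq_of_linked hx hy]
    exact mem_connectedComponentIn ((Linked.mem_iff hy).1 hx)

lemma isCompOf_preimage_iff {C : Set Plane} :
    IsCompOf C (g.cellOf ⁻¹' S) ↔ ∃ c ∈ S, C = g.cellOf ⁻¹' {d | Linked S c d} := by
  constructor
  · rintro ⟨x, hx, rfl⟩
    exact ⟨g.cellOf x, hx, g.connectedComponentIn_preimage hx⟩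
  · rintro ⟨c, hc, rfl⟩
    obtain ⟨x, rfl⟩ := g.cellOf_surjective c
    exact ⟨x, hc, (g.connectedComponentIn_preimage hc).symm⟩

lemma infinite_preimage_of_not_isVert {e : Cell} (he : ¬IsVert e) (heS : e ∈ S) :
    (g.cellOf ⁻¹' S).Infinite := by
  obtain ⟨a, ha⟩ := g.idx_surjective e.x
  obtain ⟨b, hb⟩ := g.idx_surjective e.y
  rcases (show e.x % 2 = 1 ∨ e.y % 2 = 1 by unfold IsVert at he; omega) with h | h
  · refine ((g.infinite_preimage_idx h).image (f := fun t => ![t, b]) ?_).mono ?_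
    · exact fun s _ t _ hst => congrFun hst 0
    · rintro _ ⟨t, ht, rfl⟩
      rwa [mem_preimage, show g.cellOf ![t, b] = e from Cell.ext ht hb]
  · refine ((g.infinite_preimage_idx h).image (f := fun t => ![a, t]) ?_).mono ?_
    · exact fun s _ t _ hst => congrFun hst 1
    · rintro _ ⟨t, ht, rfl⟩
      rwa [mem_preimage, show g.cellOf ![a, t] = e from Cell.ext ha ht]

lemma idx_injOn_even : InjOn g.idx {t | g.idx t % 2 = 0} := by
  intro s hs t _ hst
  obtain ⟨k, hk⟩ := Int.even_iff.2 hs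
  rw [← two_mul] at hk
  rw [g.idx_eq_two_mul.1 hk, g.idx_eq_two_mul.1 (hst.symm.trans hk)]

lemma exists_not_isVert_of_infinite (hS : S.Finite) (h : (g.cellOf ⁻¹' S).Infinite) :
    ∃ e ∈ S, ¬IsVert e := by
  by_contra! hvert
  refine h (hS.preimage fun x hx y hy hxy => ?_)
  obtain ⟨hx0, hx1⟩ := hvert _ hx
  obtain ⟨hy0, hy1⟩ := hvert _ hy
  funext i
  fin_cases i
  · exact g.idx_injOn_even hx0 hy0 (congrArg Cell.x hxy)
  · exact g.idx_injOn_even hx1 hy1 (congrArg Cell.y hxy)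

end Grid

/-! ### Regular pairs of sets of cells -/

/-- Every component of `U \ V` shares a boundary edge with exactly one component of `U ∩ V` and with
exactly one component of the complement of `U ∪ V`: one half of the zero-loss hypothesis. -/
def IsRegularPair (U V : Set Plane) : Prop :=
  ∀ C, IsCompOf C (U \ V) → (∃! T, IsCompOf T (U ∩ V) ∧ SharesEdge T C) ∧
    (∃! T, IsCompOf T (U ∪ V)ᶜ ∧ SharesEdge T C)

/-- The combinatorial form of `SharesEdge`: a cell that is not a vertex lies in the closures of both
the cell `u` and the set `V`. -/
def Adjoins (u : Cell) (V : Set Cell) : Prop :=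
  ∃ e, ¬IsVert e ∧ e ≤ u ∧ ∃ v ∈ V, e ≤ v

namespace Grid

variable (g : Grid) {U V S : Set Cell} {u u' : Cell}

lemma sharesEdge_of_adjoins (hu : u ∈ U) (huV : Adjoins u V) :
    SharesEdge (g.cellOf ⁻¹' U) (g.cellOf ⁻¹' V) := by
  obtain ⟨e, he, heu, v, hv, hev⟩ := huV
  rw [SharesEdge, g.closure_preimage, g.closure_preimage, ← preimage_inter]
  exact g.infinite_preimage_of_not_isVert he ⟨⟨u, hu, heu⟩, ⟨v, hv, hev⟩⟩

lemma exists_adjoins_of_sharesEdge (hV : (lowerClosure V : Set Cell).Finite)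
    (h : SharesEdge (g.cellOf ⁻¹' U) (g.cellOf ⁻¹' V)) : ∃ u ∈ U, Adjoins u V := by
  rw [SharesEdge, g.closure_preimage, g.closure_preimage, ← preimage_inter] at h
  obtain ⟨e, ⟨⟨u, hu, heu⟩, ⟨v, hv, hev⟩⟩, he⟩ :=
    g.exists_not_isVert_of_infinite (hV.inter_of_right _) h
  exact ⟨u, hu, e, he, heu, v, hv, hev⟩

lemma exists_adjoins_of_existsUnique (hV : (lowerClosure V : Set Cell).Finite)
    (h : ∃! T, IsCompOf T (g.cellOf ⁻¹' S) ∧ SharesEdge T (g.cellOf ⁻¹' V)) :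
    ∃ u ∈ S, Adjoins u V := by
  obtain ⟨T, ⟨hT, hTV⟩, -⟩ := h
  obtain ⟨t, ht, rfl⟩ := g.isCompOf_preimage_iff.1 hT
  obtain ⟨u, htu, hu⟩ := g.exists_adjoins_of_sharesEdge hV hTV
  exact ⟨u, htu.mem_iff.1 ht, hu⟩

lemma linked_of_existsUnique (h : ∃! T, IsCompOf T (g.cellOf ⁻¹' S) ∧ SharesEdge T (g.cellOf ⁻¹' V))
    (hu : u ∈ S) (hu' : u' ∈ S) (huV : Adjoins u V) (huV' : Adjoins u' V) : Linked S u u' := by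
  have heq := h.unique
    ⟨g.isCompOf_preimage_iff.2 ⟨u, hu, rfl⟩, g.sharesEdge_of_adjoins (Linked.refl S u) huV⟩
    ⟨g.isCompOf_preimage_iff.2 ⟨u', hu', rfl⟩, g.sharesEdge_of_adjoins (Linked.refl S u') huV'⟩
  have hmem : u' ∈ {d | Linked S u' d} := Linked.refl S u'
  rwa [← g.cellOf_surjective.preimage_injective heq] at hmem

end Grid

section

variable {π : Push} {X Z : Set Cell} {c t y u : Cell}

lemma borders_of_adjoins (hX : IsLowerSet X) (hXZ : IsStable π (X ∩ Z))
    (hc : c ∈ X \ Z) (hu : u ∈ (X ∪ Z)ᶜ) (h : Adjoins u {d | Linked (X \ Z) c d}) :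
    Borders X Z c u := by
  obtain ⟨e, he, heu, v, hcv, hev⟩ := h
  have hv : v ∈ X \ Z := hcv.mem_iff.1 hc
  have huX : u ∉ X := fun hmem => hu (Or.inl hmem)
  have heX : e ∈ X := hX hev hv.1
  have hedge : IsEdge e := by
    rcases isFace_or_isEdge_or_isVert e with hface | hedge | hvert
    exacts [absurd (hface.eq_of_le heu ▸ heX) huX, hedge, absurd hvert he]
  have huface : IsFace u :=
    (hedge.eq_or_isFace_of_le heu).resolve_left fun heq => huX (heq ▸ heX)
  by_cases heZ : e ∈ Z
  · have heXZ : e ∈ X ∩ Z := ⟨heX, heZ⟩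
    have hvface : IsFace v :=
      (hedge.eq_or_isFace_of_le hev).resolve_left fun heq => hv.2 (heq ▸ heZ)
    have hcell : π.cell e ∈ X ∩ Z := (Push.cell_mem_iff hXZ).2 heXZ
    have huopp : u = e.opp (π.cell e) :=
      (hedge.eq_or_eq_opp_of_isFace (π.isFace_cell e) huface (π.le_cell e) heu).resolve_left
        fun heq => huX (heq ▸ hcell.1)
    have hvopp : v = e.opp (π.cell e) :=
      (hedge.eq_or_eq_opp_of_isFace (π.isFace_cell e) hvface (π.le_cell e) hev).resolve_left
        fun heq => hv.2 (heq ▸ hcell.2)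
    exact absurd (huopp.trans hvopp.symm ▸ hv.1) huX
  · have he_mem : e ∈ X \ Z := ⟨heX, heZ⟩
    exact ⟨e, he_mem, hedge, hcv.trans (Linked.of_le he_mem hv hev).symm, huface, heu, huX⟩

lemma Borders.mem_diff (h : Borders X Z c t) : c ∈ X \ Z := by
  obtain ⟨e, he, -, hce, -⟩ := h
  exact hce.mem_iff.2 he

lemma Touches.mem_diff (h : Touches X Z c y) : c ∈ X \ Z := by
  obtain ⟨e, he, -, hce, -⟩ := h
  exact hce.mem_iff.2 he

lemma Borders.adjoins (h : Borders X Z c t) : Adjoins t {d | Linked (X \ Z) c d} := by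
  obtain ⟨e, -, hedge, hce, -, het, -⟩ := h
  exact ⟨e, hedge.not_isVert, het, e, hce, le_rfl⟩

lemma Borders.mem_compl (hZ : IsLowerSet Z) (h : Borders X Z c t) : t ∈ (X ∪ Z)ᶜ := by
  obtain ⟨e, he, -, -, -, het, htX⟩ := h
  exact fun ht => ht.elim htX fun htZ => he.2 (hZ het htZ)

/-- Pushing `y` and the edge `e` in the direction transverse to `e` gives an edge in the closure of
a face, and neither of them changes components. -/
lemma Touches.exists_adjoins (hX : IsStable π X) (hZ : IsStable π Z) (h : Touches X Z c y) :
    ∃ k ∈ X ∩ Z, Linked (X ∩ Z) y k ∧ Adjoins k {d | Linked (X \ Z) c d} := by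
  obtain ⟨⟨a, b⟩, he, hedge, hce, hy, hye, hyXZ⟩ := h
  obtain ⟨p, q⟩ := y
  have hXZ := hX.inter hZ
  have hdiff := hX.diff hZ
  suffices ∃ k ∈ X ∩ Z, ∃ m ∈ X \ Z, ¬IsVert k ∧ (⟨p, q⟩ : Cell) ≤ k ∧ (⟨a, b⟩ : Cell) ≤ m ∧
      k ≤ m by
    obtain ⟨k, hk, m, hm, hkv, hyk, hem, hkm⟩ := this
    exact ⟨k, hk, Linked.of_le hyXZ hk hyk, k, hkv, le_rfl, m, hce.trans (Linked.of_le he hm hem),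
      hkm⟩
  have transverse : q = b ∨ p = a := by
    simp only [IsEdge, IsVert, Cell.le_iff_arith] at *
    omega
  rcases transverse with rfl | rfl
  · exact ⟨⟨p, π.toFun q⟩, (hXZ.snd p q).2 hyXZ, ⟨a, π.toFun q⟩, (hdiff.snd a q).2 he,
      fun h => absurd (h.2.symm.trans (π.odd q)) zero_ne_one, ⟨Or.inl rfl, π.incident q⟩,
      ⟨Or.inl rfl, π.incident q⟩, hye.1, Or.inl rfl⟩
  · exact ⟨⟨π.toFun p, q⟩, (hXZ.fst p q).2 hyXZ, ⟨π.toFun p, b⟩, (hdiff.fst p b).2 he,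
      fun h => absurd (h.1.symm.trans (π.odd p)) zero_ne_one, ⟨π.incident p, Or.inl rfl⟩,
      ⟨π.incident p, Or.inl rfl⟩, Or.inl rfl, hye.2⟩

lemma IsRegularPair.isRegularCellPair (g : Grid)
    (h : IsRegularPair (g.cellOf ⁻¹' X) (g.cellOf ⁻¹' Z)) (hX : IsLowerSet X) (hZ : IsLowerSet Z)
    (hXπ : IsStable π X) (hZπ : IsStable π Z) (hfin : X.Finite) : IsRegularCellPair π X Z := by
  have existsUnique : ∀ c ∈ X \ Z,
      (∃! T, IsCompOf T (g.cellOf ⁻¹' (X ∩ Z)) ∧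
        SharesEdge T (g.cellOf ⁻¹' {d | Linked (X \ Z) c d})) ∧
      (∃! T, IsCompOf T (g.cellOf ⁻¹' (X ∪ Z)ᶜ) ∧
        SharesEdge T (g.cellOf ⁻¹' {d | Linked (X \ Z) c d})) :=
    fun c hc => h _ (g.isCompOf_preimage_iff.2 ⟨c, hc, rfl⟩)
  have finite_closure : ∀ c ∈ X \ Z, (lowerClosure {d | Linked (X \ Z) c d} : Set Cell).Finite :=
    fun c hc => hfin.subset (lowerClosure_min (fun d hd => (hd.mem_iff.1 hc).1) hX)
  refine ⟨hfin, hX, hZ, hXπ, hZπ, fun c hc => ?_, fun c t t' ht ht' => ?_, fun c hc => ?_,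
    fun c y y' hy hy' => ?_⟩
  · obtain ⟨u, hu, huc⟩ :=
      g.exists_adjoins_of_existsUnique (finite_closure c hc) (existsUnique c hc).2
    exact ⟨u, borders_of_adjoins hX (hXπ.inter hZπ) hc hu huc⟩
  · exact g.linked_of_existsUnique (existsUnique c ht.mem_diff).2 (ht.mem_compl hZ)
      (ht'.mem_compl hZ) ht.adjoins ht'.adjoins
  · obtain ⟨u, hu, e, -, heu, v, hcv, hev⟩ :=
      g.exists_adjoins_of_existsUnique (finite_closure c hc) (existsUnique c hc).1
    have hvX : v ∈ X := (hcv.mem_iff.1 hc).1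
    exact ⟨e, ⟨hX heu hu.1, hZ heu hu.2⟩,
      (hcv.mono sdiff_subset).trans (Linked.of_le (hX hev hvX) hvX hev).symm⟩
  · obtain ⟨k, hk, hyk, hkc⟩ := hy.exists_adjoins hXπ hZπ
    obtain ⟨k', hk', hyk', hkc'⟩ := hy'.exists_adjoins hXπ hZπ
    exact hyk.trans ((g.linked_of_existsUnique (existsUnique c hy.mem_diff).1 hk hk' hkc hkc').trans
      hyk'.symm)

end

/-! ### Collapses and homotopy equivalence -/

open ContinuousMap (HomotopyEquiv)

/-- `A` is a retract of `K`. The retraction is encoded as a function on the ambient space which is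
continuous on `K`. -/
def IsRetractOf {E : Type*} [TopologicalSpace E] (A K : Set E) : Prop :=
  A ⊆ K ∧ ∃ r : E → E, ContinuousOn r K ∧ MapsTo r K A ∧ EqOn r id A

section Retracts

variable {E F : Type*} [TopologicalSpace E] [TopologicalSpace F] {A K : Set F}

lemma IsRetractOf.preimage (h : IsRetractOf A K) (e : E ≃ₜ F) :
    IsRetractOf (e ⁻¹' A) (e ⁻¹' K) := by
  obtain ⟨hAK, r, hr, hmaps, hid⟩ := h
  refine ⟨preimage_mono hAK, fun x => e.symm (r (e x)), ?_, fun x hx => ?_, fun x hx => ?_⟩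
  · exact e.symm.continuous.comp_continuousOn
      (hr.comp e.continuous.continuousOn (mapsTo_preimage e K))
  · simpa using hmaps hx
  · simp [hid hx]

variable [AddCommGroup E] [Module ℝ E] [ContinuousAdd E] [ContinuousSMul ℝ E]

lemma nonempty_homotopyEquiv_of_segment_subset {U X : Set E} {r : E → E} (hUX : U ⊆ X)
    (hr : ContinuousOn r X) (hmaps : MapsTo r X U) (hid : EqOn r id U)
    (hseg : ∀ x ∈ X, segment ℝ (r x) x ⊆ X) : Nonempty (HomotopyEquiv X U) := by
  let retraction : C(X, U) := ⟨hmaps.restrict, hr.mapsToRestrict hmaps⟩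
  let incl : C(U, X) := ⟨inclusion hUX, continuous_inclusion hUX⟩
  have hr' : Continuous fun x : X => r x := continuousOn_iff_continuous_domRestrict.1 hr
  let path : unitInterval × X → X := fun z =>
    ⟨(1 - (z.1 : ℝ)) • r z.2 + (z.1 : ℝ) • (z.2 : E), hseg _ z.2.2
      ⟨_, _, sub_nonneg.2 z.1.2.2, z.1.2.1, sub_add_cancel _ _, rfl⟩⟩
  have hpath : Continuous path := Continuous.subtype_mk
    (Continuous.add (.smul (by fun_prop) (hr'.comp continuous_snd)) (.smul (by fun_prop)
      (by fun_prop))) _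
  have left_inv : (incl.comp retraction).Homotopic (ContinuousMap.id X) :=
    ⟨⟨⟨path, hpath⟩, fun x => Subtype.ext (by simp [path, incl, retraction]),
      fun x => Subtype.ext (by simp [path])⟩⟩
  have right_inv : retraction.comp incl = ContinuousMap.id U :=
    ContinuousMap.ext fun x => Subtype.ext (hid x.2)
  exact ⟨⟨retraction, incl, left_inv, right_inv ▸ ContinuousMap.Homotopic.refl _⟩⟩

open Classical in
lemma IsRetractOf.nonempty_homotopyEquiv_union {U K : Set E} (h : IsRetractOf (U ∩ K) K)
    (hU : IsClosed U) (hK : IsClosed K) (hconv : Convex ℝ K) :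
    Nonempty (HomotopyEquiv ↥(U ∪ K) U) := by
  obtain ⟨-, r, hr, hmaps, hid⟩ := h
  let ρ : E → E := U.piecewise id r
  have eqOn_id : EqOn ρ id U := piecewise_eqOn U id r
  have eqOn_r : EqOn ρ r K := by
    intro x hx
    by_cases hxU : x ∈ U
    · exact (eqOn_id hxU).trans (hid ⟨hxU, hx⟩).symm
    · exact piecewise_eq_of_notMem U id r hxU
  refine nonempty_homotopyEquiv_of_segment_subset subset_union_left
    ((continuousOn_id.congr eqOn_id).union_of_isClosed (hr.congr eqOn_r) hU hK) ?_ eqOn_id ?_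
  · rintro x (hx | hx)
    · rwa [eqOn_id hx]
    · exact eqOn_r hx ▸ (hmaps hx).1
  · rintro x (hx | hx)
    · rw [eqOn_id hx, id, segment_same]
      exact singleton_subset_iff.2 (Or.inl hx)
    · rw [eqOn_r hx]
      exact (hconv.segment_subset (hmaps hx).2 hx).trans subset_union_right

end Retracts

lemma isRetractOf_prod_of_mem {E F : Type*} [TopologicalSpace E] [TopologicalSpace F] {I : Set E}
    {q : E} (hq : q ∈ I) (J : Set F) : IsRetractOf (I ×ˢ J \ (I \ {q}) ×ˢ J) (I ×ˢ J) := by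
  refine ⟨sdiff_subset, fun z => (q, z.2), by fun_prop, fun z hz => ⟨⟨hq, hz.2⟩, ?_⟩,
    fun z hz => ?_⟩
  · exact fun h => h.1.2 rfl
  · have : z.1 = q := by_contra fun hne => hz.2 ⟨⟨hz.1.1, hne⟩, hz.1.2⟩
    exact Prod.ext this.symm rfl

/-- The retraction is the radial one from the point `(0, 0)`, which lies beyond the removed side. -/
lemma isRetractOf_rectangle :
    IsRetractOf (Icc (1 : ℝ) 2 ×ˢ Icc (-1 : ℝ) 1 \ Ico (1 : ℝ) 2 ×ˢ Ioo (-1 : ℝ) 1)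
      (Icc (1 : ℝ) 2 ×ˢ Icc (-1 : ℝ) 1) := by
  let m : ℝ × ℝ → ℝ := fun z => max (z.1 / 2) |z.2|
  have hm : ∀ z ∈ Icc (1 : ℝ) 2 ×ˢ Icc (-1 : ℝ) 1, 0 < m z ∧ m z ≤ 1 := fun z hz =>
    ⟨lt_max_of_lt_left (half_pos (one_pos.trans_le hz.1.1)),
      max_le (by linarith [hz.1.2]) (abs_le.2 hz.2)⟩
  refine ⟨sdiff_subset, fun z => (z.1 / m z, z.2 / m z), ?_, fun z hz => ?_, fun z hz => ?_⟩
  · have : ∀ z ∈ Icc (1 : ℝ) 2 ×ˢ Icc (-1 : ℝ) 1, m z ≠ 0 := fun z hz => (hm z hz).1.ne'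
    fun_prop (disch := assumption)
  · obtain ⟨hpos, hle⟩ := hm z hz
    have hfst : z.1 / 2 ≤ m z := le_max_left _ _
    have hsnd : |z.2| ≤ m z := le_max_right _ _
    refine ⟨⟨⟨?_, ?_⟩, abs_le.1 ?_⟩, fun h => ?_⟩
    · exact (one_le_div hpos).2 (hle.trans hz.1.1)
    · exact (div_le_iff₀ hpos).2 (by linarith)
    · rwa [abs_div, abs_of_pos hpos, div_le_one hpos]
    · obtain ⟨⟨-, hlt⟩, hlt'⟩ := h
      rw [div_lt_iff₀ hpos] at hlt
      replace hlt' := abs_lt.2 hlt'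
      rw [abs_div, abs_of_pos hpos, div_lt_one hpos] at hlt'
      exact (max_lt (by linarith) hlt').false
  · obtain ⟨hle, hz'⟩ := And.intro (hm z hz.1).2 hz.2
    have hmz : m z = 1 := by
      refine hle.antisymm (le_of_not_gt fun hlt => hz' ⟨⟨hz.1.1.1, ?_⟩, abs_lt.1 ?_⟩)
      · linarith [(le_max_left (z.1 / 2) |z.2|).trans_lt hlt]
      · exact (le_max_right _ _).trans_lt hlt
    simp [hmz]

lemma isRetractOf_box {p q γ δ : ℝ} (hpq : p ≠ q) (hγδ : γ < δ) :
    IsRetractOf (uIcc p q ×ˢ Icc γ δ \ (uIcc p q \ {q}) ×ˢ Ioo γ δ) (uIcc p q ×ˢ Icc γ δ) := by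
  have hne : q - p ≠ 0 := sub_ne_zero.2 hpq.symm
  have hpos : 0 < (δ - γ) / 2 := half_pos (sub_pos.2 hγδ)
  let e : ℝ ≃ₜ ℝ := (affineHomeomorph (q - p) (2 * p - q) hne).symm
  let e' : ℝ ≃ₜ ℝ := (affineHomeomorph ((δ - γ) / 2) ((γ + δ) / 2) hpos.ne').symm
  have he : ⇑e = (fun t => t / (q - p)) ∘ fun t => t - (2 * p - q) := rfl
  have he' : ⇑e' = (fun t => t * ((δ - γ) / 2)⁻¹) ∘ fun t => t - (γ + δ) / 2 := rfl
  have preimage_Icc : e ⁻¹' Icc 1 2 = uIcc p q := by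
    rw [← uIcc_of_le one_le_two, he, preimage_comp, preimage_div_const_uIcc hne,
      preimage_sub_const_uIcc]
    ring_nf
  have preimage_Ico : e ⁻¹' Ico 1 2 = uIcc p q \ {q} := by
    have : e q = 2 := (div_eq_iff hne).2 (by ring)
    rw [← Icc_sdiff_right, preimage_sdiff, preimage_Icc, ← this, ← image_singleton,
      e.injective.preimage_image]
  have preimage_Icc' : e' ⁻¹' Icc (-1) 1 = Icc γ δ := by
    rw [he', preimage_comp, preimage_mul_const_Icc₀ _ _ (inv_pos.2 hpos), preimage_sub_const_Icc,
      div_inv_eq_mul, div_inv_eq_mul]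
    ring_nf
  have preimage_Ioo' : e' ⁻¹' Ioo (-1) 1 = Ioo γ δ := by
    rw [he', preimage_comp, preimage_mul_const_Ioo₀ _ _ (inv_pos.2 hpos), preimage_sub_const_Ioo,
      div_inv_eq_mul, div_inv_eq_mul]
    ring_nf
  have h := isRetractOf_rectangle.preimage (e.prodCongr e')
  rwa [preimage_sdiff, Homeomorph.coe_prodCongr, preimage_prod_map_prod, preimage_prod_map_prod,
    preimage_Icc, preimage_Ico, preimage_Icc', preimage_Ioo'] at h

namespace Grid

variable (g : Grid)

lemma exists_uIcc_of_incident {τ σ : ℤ} (h : Incident τ σ) (hne : τ ≠ σ) : ∃ p q, p ≠ q ∧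
    {t | Incident (g.idx t) σ} = uIcc p q ∧ {t | g.idx t = τ ∨ g.idx t = σ} = uIcc p q \ {q} := by
  obtain ⟨k, rfl | rfl⟩ := Int.odd_iff.2 (show σ % 2 = 1 by unfold Incident at h; omega)
  have hlt : g.line k < g.line (k + 1) := g.line_lt_line.2 (lt_add_one k)
  rcases (by unfold Incident at h; omega : τ = 2 * k ∨ τ = 2 * (k + 1)) with rfl | rfl
  · refine ⟨g.line k, g.line (k + 1), hlt.ne, ?_, ?_⟩
    · rw [uIcc_of_lt hlt]
      exact Set.ext fun t => g.incident_two_mul_add_one_iff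
    · ext t
      rw [uIcc_of_lt hlt, Icc_sdiff_right, mem_Ico, ← not_le, ← g.two_mul_le_idx,
        ← g.two_mul_le_idx, mem_ofPred_eq]
      omega
  · refine ⟨g.line (k + 1), g.line k, hlt.ne', ?_, ?_⟩
    · rw [uIcc_of_gt hlt]
      exact Set.ext fun t => g.incident_two_mul_add_one_iff
    · ext t
      rw [uIcc_of_gt hlt, Icc_sdiff_left, mem_Ioc, ← not_le, ← g.idx_le_two_mul,
        ← g.idx_le_two_mul, mem_ofPred_eq]
      omega

/-- If `β` is even, then the strip degenerates to a segment, which retracts onto one of its ends. -/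
lemma isRetractOf_of_incident {τ σ : ℤ} (h : Incident τ σ) (hne : τ ≠ σ) (β : ℤ) :
    IsRetractOf
      ({t | Incident (g.idx t) σ} ×ˢ {t | Incident (g.idx t) β} \
        {t | g.idx t = τ ∨ g.idx t = σ} ×ˢ (g.idx ⁻¹' {β}))
      ({t | Incident (g.idx t) σ} ×ˢ {t | Incident (g.idx t) β}) := by
  obtain ⟨p, q, hpq, hclosed, hopen⟩ := g.exists_uIcc_of_incident h hne
  rw [hclosed, hopen]
  obtain ⟨m, rfl | rfl⟩ := Int.even_or_odd' β
  · have : {t | Incident (g.idx t) (2 * m)} = g.idx ⁻¹' {2 * m} := by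
      ext t
      simp only [Incident, mem_ofPred_eq, mem_preimage, mem_singleton_iff]
      omega
    rw [this]
    exact isRetractOf_prod_of_mem right_mem_uIcc _
  · have : {t | Incident (g.idx t) (2 * m + 1)} = Icc (g.line m) (g.line (m + 1)) :=
      Set.ext fun t => g.incident_two_mul_add_one_iff
    rw [this, preimage_idx_two_mul_add_one]
    exact isRetractOf_box hpq (g.line_lt_line.2 (lt_add_one m))

variable {X Y : Set Cell} {s t : Cell}

lemma isRetractOf_preimage_Iic (hts : t < s) (hcodim : t.x = s.x ∨ t.y = s.y) :
    IsRetractOf (g.cellOf ⁻¹' (Iic s \ {t, s})) (g.cellOf ⁻¹' Iic s) := by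
  rcases hcodim with h | h
  · have hne : t.y ≠ s.y := fun h' => hts.ne (Cell.ext h h')
    convert (g.isRetractOf_of_incident hts.le.2 hne s.x).preimage
      (Homeomorph.finTwoArrow.trans (Homeomorph.prodComm ℝ ℝ)) using 1
    · ext x
      simp [cellOf, Cell.le_iff, Cell.ext_iff, h]
      tauto
    · ext x
      simp [cellOf, Cell.le_iff, and_comm]
  · have hne : t.x ≠ s.x := fun h' => hts.ne (Cell.ext h' h)
    convert (g.isRetractOf_of_incident hts.le.1 hne s.y).preimage Homeomorph.finTwoArrow using 1
    · ext x
      simp [cellOf, Cell.le_iff, Cell.ext_iff, h]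
      tauto
    · ext x
      simp [cellOf, Cell.le_iff]

lemma nonempty_homotopyEquiv_of_isFreeFace (hX : IsLowerSet X) (h : IsFreeFace X t s) :
    Nonempty (HomotopyEquiv (g.cellOf ⁻¹' X) (g.cellOf ⁻¹' (X \ {t, s}))) := by
  have hIic : Iic s ⊆ X := fun c hcs => hX hcs h.mem
  have hunion : g.cellOf ⁻¹' X = g.cellOf ⁻¹' (X \ {t, s}) ∪ g.cellOf ⁻¹' Iic s := by
    rw [← preimage_union]
    congr 1
    refine Subset.antisymm (fun c hc => ?_) (union_subset sdiff_subset hIic)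
    by_cases hcs : c ≤ s
    · exact Or.inr hcs
    · refine Or.inl ⟨hc, ?_⟩
      rintro (rfl | rfl)
      exacts [hcs h.lt.le, hcs le_rfl]
  have hinter : g.cellOf ⁻¹' (X \ {t, s}) ∩ g.cellOf ⁻¹' Iic s = g.cellOf ⁻¹' (Iic s \ {t, s}) := by
    rw [← preimage_inter, ← inter_sdiff_right_comm, inter_eq_right.2 hIic]
  rw [hunion]
  refine IsRetractOf.nonempty_homotopyEquiv_union ?_
    (g.isClosed_preimage (h.isLowerSet_diff hX)) (g.isClosed_preimage (isLowerSet_Iic s)) ?_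
  · exact hinter ▸ g.isRetractOf_preimage_Iic h.lt h.codim_one
  · exact g.closure_preimage_cellOf_singleton s ▸ (g.convex_preimage_cellOf s).closure

lemma nonempty_homotopyEquiv_of_collapses (hX : IsLowerSet X) (h : Collapses X Y) :
    Nonempty (HomotopyEquiv (g.cellOf ⁻¹' X) (g.cellOf ⁻¹' Y)) := by
  induction h using Relation.ReflTransGen.head_induction_on with
  | refl => exact ⟨ContinuousMap.HomotopyEquiv.refl _⟩
  | head hcollapse _ ih =>
    obtain ⟨t, s, hfree, rfl⟩ := hcollapse
    obtain ⟨f⟩ := g.nonempty_homotopyEquiv_of_isFreeFace hX hfree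
    obtain ⟨f'⟩ := ih (hfree.isLowerSet_diff hX)
    exact ⟨f.trans f'⟩

end Grid

lemma IsRegularPair.nonempty_homotopyEquiv_inter {π : Push} {X Z : Set Cell} (g : Grid)
    (h : IsRegularPair (g.cellOf ⁻¹' X) (g.cellOf ⁻¹' Z)) (hX : IsLowerSet X) (hZ : IsLowerSet Z)
    (hXπ : IsStable π X) (hZπ : IsStable π Z) (hfin : X.Finite) :
    Nonempty (HomotopyEquiv (g.cellOf ⁻¹' X) (g.cellOf ⁻¹' (X ∩ Z))) :=
  g.nonempty_homotopyEquiv_of_collapses hX (h.isRegularCellPair g hX hZ hXπ hZπ hfin).collapses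

/-! ### Thickened images -/

section Images

variable {S : Set (ℕ × ℕ)} {j : ℤ} {δ δ' : ℝ}

lemma max_min_mem_Icc_and_abs_sub_le {a b t : ℝ} (hab : a ≤ b) (hδ : 0 ≤ δ)
    (ht : t ∈ Icc (a - δ) (b + δ)) :
    max a (min t b) ∈ Icc a b ∧ |max a (min t b) - t| ≤ δ := by
  refine ⟨⟨le_max_left _ _, max_le hab (min_le_right _ _)⟩, ?_⟩
  obtain ⟨hat, htb⟩ := ht
  rw [abs_le]
  rcases max_cases a (min t b) with h | h <;> rcases min_cases t b with h' | h' <;>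
    constructor <;> linarith

lemma mem_thick_fg_iff (hδ : 0 ≤ δ) {y : Plane} :
    y ∈ thick δ (fg S) ↔ ∃ p ∈ S, y 0 ∈ Icc ((p.1 : ℝ) - 1 - δ) (p.1 + δ) ∧
      y 1 ∈ Icc ((p.2 : ℝ) - 1 - δ) (p.2 + δ) := by
  constructor
  · rintro ⟨x, hx, hxy⟩
    obtain ⟨p, hp, ⟨hx0, hx0'⟩, hx1, hx1'⟩ := mem_iUnion₂.1 hx
    have hdist := (pi_norm_le_iff_of_nonneg hδ).1 hxy
    obtain ⟨h0, h0'⟩ := abs_le.1 (hdist 0)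
    obtain ⟨h1, h1'⟩ := abs_le.1 (hdist 1)
    rw [Pi.sub_apply] at h0 h0' h1 h1'
    exact ⟨p, hp, ⟨by linarith, by linarith⟩, by linarith, by linarith⟩
  · rintro ⟨p, hp, hy0, hy1⟩
    obtain ⟨hmem0, hdist0⟩ := max_min_mem_Icc_and_abs_sub_le (sub_one_lt _).le hδ hy0
    obtain ⟨hmem1, hdist1⟩ := max_min_mem_Icc_and_abs_sub_le (sub_one_lt _).le hδ hy1
    refine ⟨![max (p.1 - 1) (min (y 0) p.1), max (p.2 - 1) (min (y 1) p.2)],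
      mem_iUnion₂.2 ⟨p, hp, hmem0, hmem1⟩, (pi_norm_le_iff_of_nonneg hδ).2 fun i => ?_⟩
    fin_cases i
    exacts [hdist0, hdist1]

lemma exists_grid_line_eq {L : ℤ → ℝ} (hL : StrictMono L) (hlow : ∀ x, ∃ k, L k ≤ x)
    (hupp : ∀ x, ∃ k, x < L k) : ∃ g : Grid, g.line = L := by
  classical
  have hgreatest : ∀ x, ∃ k, L k ≤ x ∧ ∀ m, L m ≤ x → m ≤ k := by
    intro x
    obtain ⟨b, hb⟩ := hupp x
    exact Int.exists_greatest_of_bdd ⟨b, fun m hm => (hL.lt_iff_lt.1 (hm.trans_lt hb)).le⟩ (hlow x)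
  choose f hf hf_max using hgreatest
  have le_f : ∀ {k x}, k ≤ f x ↔ L k ≤ x := fun {k x} =>
    ⟨fun hk => (hL.monotone hk).trans (hf x), hf_max x k⟩
  refine ⟨⟨L, fun x => if L (f x) = x then 2 * f x else 2 * f x + 1, fun {k x} => ?_,
    fun {k x} => ?_⟩, rfl⟩
  · rw [← le_f]
    split_ifs <;> omega
  · split_ifs with hx
    · have : x ≤ L k ↔ f x ≤ k := by rw [← hL.le_iff_le, hx]
      rw [this]
      omega
    · have : x ≤ L k ↔ f x < k := by
        refine ⟨fun hk => hL.lt_iff_lt.1 (((hf x).lt_of_ne hx).trans_le hk), fun hk => ?_⟩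
        exact (not_le.1 fun h => (le_f.2 h).not_gt hk).le
      rw [this]
      omega

/-- The grid has four lines around each integer `i`, and those numbered `4 * i + 3 - j` and
`4 * i + j` are `i - δ` and `i + δ`; this is used for `j = 2, 3`. -/
def Grid.HasMargin (g : Grid) (j : ℤ) (δ : ℝ) : Prop :=
  ∀ i : ℤ, g.line (4 * i + 3 - j) = i - δ ∧ g.line (4 * i + j) = i + δ

/-- The line numbered `k` of the grid formed by `i - δ'`, `i - δ`, `i + δ`, `i + δ'` for integers
`i`. -/
def marginLine (δ δ' : ℝ) (k : ℤ) : ℝ :=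
  (k / 4 : ℤ) + if k % 4 = 0 then -δ' else if k % 4 = 1 then -δ else if k % 4 = 2 then δ else δ'

lemma marginLine_four_mul_add (i : ℤ) {r : ℤ} (hr : 0 ≤ r) (hr' : r < 4) :
    marginLine δ δ' (4 * i + r) =
      i + if r = 0 then -δ' else if r = 1 then -δ else if r = 2 then δ else δ' := by
  rw [marginLine, show (4 * i + r) / 4 = i by omega, show (4 * i + r) % 4 = r by omega]

lemma strictMono_marginLine (hδ : 0 < δ) (hlt : δ < δ') (hδ' : δ' < 1 / 2) :
    StrictMono (marginLine δ δ') := by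
  refine strictMono_int_of_lt_succ fun k => ?_
  obtain ⟨i, rfl | rfl | rfl | rfl⟩ : ∃ i, k = 4 * i + 0 ∨ k = 4 * i + 1 ∨ k = 4 * i + 2 ∨
      k = 4 * i + 3 := ⟨k / 4, by omega⟩
  on_goal 4 => rw [show 4 * i + 3 + 1 = 4 * (i + 1) + 0 by ring]
  any_goals rw [add_assoc (4 * i)]
  all_goals
    rw [marginLine_four_mul_add _ (by norm_num) (by norm_num),
      marginLine_four_mul_add _ (by norm_num) (by norm_num)]
    norm_num
    linarith

lemma exists_grid_hasMargin_of_lt (hδ : 0 < δ) (hlt : δ < δ') (hδ' : δ' < 1 / 2) :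
    ∃ g : Grid, g.HasMargin 2 δ ∧ g.HasMargin 3 δ' := by
  have line_zero : ∀ i : ℤ, marginLine δ δ' (4 * i) = i - δ' := fun i => by
    simpa [sub_eq_add_neg] using marginLine_four_mul_add (δ := δ) (δ' := δ') i le_rfl (by norm_num)
  obtain ⟨g, hg⟩ := exists_grid_line_eq (strictMono_marginLine hδ hlt hδ')
    (fun x => ⟨4 * ⌊x⌋, by rw [line_zero]; linarith [Int.floor_le x]⟩)
    (fun x => ⟨4 * (⌊x⌋ + 2), by
      rw [line_zero]; push_cast; linarith [Int.lt_floor_add_one x]⟩)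
  refine ⟨g, fun i => ⟨?_, ?_⟩, fun i => ⟨?_, ?_⟩⟩ <;> rw [hg]
  · rw [add_sub_assoc, marginLine_four_mul_add i (by norm_num) (by norm_num)]
    norm_num
    ring
  · rw [marginLine_four_mul_add i (by norm_num) (by norm_num)]
    norm_num
  · rw [add_sub_cancel_right, line_zero]
  · rw [marginLine_four_mul_add i (by norm_num) (by norm_num)]
    norm_num

lemma exists_grid_hasMargin (hδ : δ ∈ Ioo 0 (1 / 2)) (hδ' : δ' ∈ Ioo 0 (1 / 2)) :
    ∃ g : Grid, ∃ j j', (j = 2 ∨ j = 3) ∧ (j' = 2 ∨ j' = 3) ∧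
      g.HasMargin j δ ∧ g.HasMargin j' δ' := by
  rcases lt_trichotomy δ δ' with hlt | rfl | hlt
  · obtain ⟨g, h, h'⟩ := exists_grid_hasMargin_of_lt hδ.1 hlt hδ'.2
    exact ⟨g, 2, 3, Or.inl rfl, Or.inr rfl, h, h'⟩
  · obtain ⟨η, hη, hη'⟩ := exists_between hδ.2
    obtain ⟨g, h, -⟩ := exists_grid_hasMargin_of_lt hδ.1 hη hη'
    exact ⟨g, 2, 2, Or.inl rfl, Or.inl rfl, h, h⟩
  · obtain ⟨g, h', h⟩ := exists_grid_hasMargin_of_lt hδ'.1 hlt hδ.2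
    exact ⟨g, 3, 2, Or.inr rfl, Or.inl rfl, h, h'⟩

/-- The cells of the thickening of the image `S` by `δ`, on a grid that has margin `δ` at `j`. -/
def imageCells (S : Set (ℕ × ℕ)) (j : ℤ) : Set Cell :=
  {c | ∃ p ∈ S, c.x ∈ Icc (8 * (p.1 : ℤ) - 2 - 2 * j) (8 * p.1 + 2 * j) ∧
    c.y ∈ Icc (8 * (p.2 : ℤ) - 2 - 2 * j) (8 * p.2 + 2 * j)}

lemma Grid.HasMargin.idx_mem_Icc_iff {g : Grid} (hg : g.HasMargin j δ) (p : ℕ) (t : ℝ) :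
    g.idx t ∈ Icc (8 * (p : ℤ) - 2 - 2 * j) (8 * p + 2 * j) ↔
      t ∈ Icc ((p : ℝ) - 1 - δ) (p + δ) := by
  rw [show 8 * (p : ℤ) - 2 - 2 * j = 2 * (4 * (p - 1 : ℤ) + 3 - j) by ring,
    show 8 * (p : ℤ) + 2 * j = 2 * (4 * (p : ℤ) + j) by ring, mem_Icc, g.two_mul_le_idx,
    g.idx_le_two_mul, (hg _).1, (hg _).2, mem_Icc]
  push_cast
  rfl

lemma Grid.HasMargin.thick_fg_eq {g : Grid} (hg : g.HasMargin j δ) (hδ : 0 ≤ δ)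
    (S : Set (ℕ × ℕ)) : thick δ (fg S) = g.cellOf ⁻¹' imageCells S j := by
  ext y
  simp only [mem_thick_fg_iff hδ, ← hg.idx_mem_Icc_iff]
  rfl

lemma isLowerSet_imageCells (S : Set (ℕ × ℕ)) (j : ℤ) : IsLowerSet (imageCells S j) := by
  rintro c d hdc ⟨p, hp, hx, hy⟩
  obtain ⟨hdx, hdy⟩ := Cell.le_iff.1 hdc
  unfold Incident at hdx hdy
  rw [mem_Icc] at hx hy
  exact ⟨p, hp, mem_Icc.2 (by omega), mem_Icc.2 (by omega)⟩

lemma finite_imageCells (hS : S.Finite) (j : ℤ) : (imageCells S j).Finite := by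
  have hpixel : ∀ p ∈ S, {c : Cell | c.x ∈ Icc (8 * (p.1 : ℤ) - 2 - 2 * j) (8 * p.1 + 2 * j) ∧
      c.y ∈ Icc (8 * (p.2 : ℤ) - 2 - 2 * j) (8 * p.2 + 2 * j)}.Finite := fun p _ => by
    have hinj : Function.Injective fun c : Cell => (c.x, c.y) := fun c d h =>
      Cell.ext (congrArg Prod.fst h) (congrArg Prod.snd h)
    exact ((finite_Icc _ _).prod (finite_Icc _ _)).preimage hinj.injOn
  refine (hS.biUnion hpixel).subset ?_
  rintro c ⟨p, hp, hc⟩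
  exact mem_biUnion hp hc

/-- The push off the lines that keeps thickened images: around each integer, the lines numbered
`0, 1, 2, 3` modulo `4` are pushed towards the inside of the thickened pixels they bound. -/
def marginPush : Push where
  toFun a := if a % 2 = 1 then a else if a % 8 < 4 then a + 1 else a - 1
  odd a := by split_ifs <;> omega
  incident a := by unfold Incident; split_ifs <;> omega

lemma marginPush_mem_Icc_iff (hj : j = 2 ∨ j = 3) (p : ℕ) (a : ℤ) :
    marginPush.toFun a ∈ Icc (8 * (p : ℤ) - 2 - 2 * j) (8 * p + 2 * j) ↔
      a ∈ Icc (8 * (p : ℤ) - 2 - 2 * j) (8 * p + 2 * j) := by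
  simp only [marginPush, mem_Icc]
  rcases hj with rfl | rfl <;> split_ifs <;> omega

lemma isStable_imageCells (hj : j = 2 ∨ j = 3) (S : Set (ℕ × ℕ)) :
    IsStable marginPush (imageCells S j) where
  fst a b := by simp only [imageCells, mem_ofPred_eq, marginPush_mem_Icc_iff hj]
  snd a b := by simp only [imageCells, mem_ofPred_eq, marginPush_mem_Icc_iff hj]

lemma OnGrid.finite {h w : ℕ} (hS : OnGrid S h w) : S.Finite :=
  ((finite_Icc 1 h).prod (finite_Icc 1 w)).subset hS

end Images

lemma ZeroLoss.isRegularPair {P G : Set (ℕ × ℕ)} {ε : ℝ} (h : ZeroLoss P G ε) :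
    IsRegularPair (thick ε (fg P)) (thick (2 * ε) (fg G)) ∧
      IsRegularPair (thick (2 * ε) (fg G)) (thick ε (fg P)) := by
  simp only [ZeroLoss, RegularComp, FPset, FNset, TPset, TNset, ← compl_union] at h
  simp only [inter_comm (thick ε (fg P))ᶜ, ← sdiff_eq] at h
  refine ⟨h.1, ?_⟩
  rw [IsRegularPair, inter_comm, union_comm]
  exact h.2

theorem zero_loss_thickened_foregrounds_homotopyEquiv_general {P G : Set (ℕ × ℕ)}
    (hP : P.Finite) (hG : G.Finite) {δ δ' : ℝ} (hδ : δ ∈ Ioo 0 (1 / 2)) (hδ' : δ' ∈ Ioo 0 (1 / 2))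
    (hPG : IsRegularPair (thick δ (fg P)) (thick δ' (fg G)))
    (hGP : IsRegularPair (thick δ' (fg G)) (thick δ (fg P))) :
    Nonempty (HomotopyEquiv (thick δ (fg P)) (thick δ' (fg G))) := by
  obtain ⟨g, j, j', hj, hj', hgδ, hgδ'⟩ := exists_grid_hasMargin hδ hδ'
  rw [hgδ.thick_fg_eq hδ.1.le, hgδ'.thick_fg_eq hδ'.1.le] at hPG hGP ⊢
  have hlowP := isLowerSet_imageCells P j
  have hlowG := isLowerSet_imageCells G j'
  have hstabP := isStable_imageCells hj P
  have hstabG := isStable_imageCells hj' G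
  obtain ⟨eP⟩ := hPG.nonempty_homotopyEquiv_inter g hlowP hlowG hstabP hstabG
    (finite_imageCells hP j)
  obtain ⟨eG⟩ := hGP.nonempty_homotopyEquiv_inter g hlowG hlowP hstabG hstabP
    (finite_imageCells hG j')
  rw [inter_comm] at eG
  exact ⟨eP.trans eG.symm⟩

/-- Under the zero-loss hypothesis, the thickened prediction foreground and the
thickened ground-truth foreground are homotopy equivalent. -/
theorem zero_loss_thickened_foregrounds_homotopyEquiv
    (h w : ℕ) (P G : Set (ℕ × ℕ)) (hP : OnGrid P h w) (hG : OnGrid G h w)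
    (ε : ℝ) (hε0 : 0 < ε) (hε : ε < 1 / 4) (hzero : ZeroLoss P G ε) :
    Nonempty (ContinuousMap.HomotopyEquiv ↥(thick ε (fg P)) ↥(thick (2 * ε) (fg G))) :=
  zero_loss_thickened_foregrounds_homotopyEquiv_general hP.finite hG.finite
    ⟨hε0, by linarith⟩ ⟨by linarith, by linarith⟩ hzero.isRegularPair.1 hzero.isRegularPair.2

end
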